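/- arXiv:math/0611745 — 3 statements merged into one kernel-verified Lean document; each statement's English description precedes it below -/
import Mathlib

section
/- Let n ≥ 1, let x_1 < ⋯ < x_n be real numbers and m_1, …, m_n > 0, set l_k = x_{k+1} − x_k, and let A(z) be the third entry of S(z)(1,0,0)ᵗ, where S(z) = G_n(z) L_{n−1} G_{n−1}(z) ⋯ L_1 G_1(z) with L_k = [[1, l_k, l_k²/2],[0,1,l_k],[0,0,1]] and G_k(z) = [[1,0,0],[0,1,0],[−2 m_k z,0,1]]. Then A is a polynomial of degree n in z whose roots are all real, simple, and nonnegative; precisely, A has exactly n distinct real roots 0 = λ_0 < λ_1 < ⋯ < λ_{n−1}. -/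
open Polynomial Matrix

/-- The transfer matrix `L_k` of the discrete cubic string (with gap `l`). -/
noncomputable def Lmat (l : ℝ) : Matrix (Fin 3) (Fin 3) (Polynomial ℝ) :=
  !![1, Polynomial.C l, Polynomial.C (l ^ 2 / 2);
     0, 1, Polynomial.C l;
     0, 0, 1]

/-- The transfer matrix `G_k(z)` of the discrete cubic string (with mass `m`). -/
noncomputable def Gmat (m : ℝ) : Matrix (Fin 3) (Fin 3) (Polynomial ℝ) :=
  !![1, 0, 0;
     0, 1, 0;
     Polynomial.C (-2 * m) * Polynomial.X, 0, 1]

/-- The transition matrix `S(z) = G_n(z) L_{n−1} G_{n−1}(z) ⋯ L_1 G_1(z)` of the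
discrete cubic string with masses `m 1, …, m n` and gaps `l 1, …, l (n−1)`. -/
noncomputable def transMat (m l : ℕ → ℝ) : ℕ → Matrix (Fin 3) (Fin 3) (Polynomial ℝ)
  | 0 => 1
  | 1 => Gmat (m 1)
  | (k + 2) => Gmat (m (k + 2)) * Lmat (l (k + 1)) * transMat m l (k + 1)

/-!
Put `t = -z` and record the solution at a point as the jet `(φ, φ_x, φ_xx)`. In the cyclic order
`φ, φ_x, φ_xx, tφ, tφ_x, …` of its entries, crossing a gap or a mass is a composition of steps which
add to one entry a nonnegative multiple of the next. For `Im t > 0` such steps preserve the property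
that the entries turn counterclockwise in the plane. If `(φ, φ_x, φ_xx)` arrives at a mass `m`,
this property gives `Im (conj φ · φ_xx) ≥ 0`, so that `A = φ_xx + 2 m t φ` satisfies
`|A| ≥ 2 m |Im t| |φ|`. This bound makes all roots of `A` real, since by the same property `φ` has
no nonreal zeros, and simple, since `A` vanishes at most to first order where `φ ≠ 0`. That `A` and
`φ` have no common real zero follows from the signs of the three entries.
-/

section PolynomialRoots

theorem rootMultiplicity_eq_one_of_le_norm_aeval {p q : ℝ[X]} {K x : ℝ} (hK : 0 < K)
    (hle : ∀ z : ℂ, K * |z.im| * ‖aeval z q‖ ≤ ‖aeval z p‖) (hpx : p.IsRoot x)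
    (hqx : q.eval x ≠ 0) : p.rootMultiplicity x = 1 := by
  obtain ⟨r, rfl⟩ := dvd_iff_isRoot.2 hpx
  let path : ℝ → ℂ := fun y => x + y * Complex.I
  have hoff : ∀ y ≠ 0, K * ‖aeval (path y) q‖ ≤ ‖aeval (path y) r‖ := by
    intro y hy
    have h := hle (path y)
    have him : (path y).im = y := by simp [path]
    have hlin : ‖aeval (path y) (X - C x)‖ = |y| := by simp [path]
    rw [him, map_mul, norm_mul, hlin] at h
    refine le_of_mul_le_mul_left ?_ (abs_pos.2 hy)
    linarith
  have hreal (f : ℝ[X]) : ‖aeval (path 0) f‖ = |f.eval x| := by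
    simpa [path] using congrArg norm (aeval_algebraMap_apply_eq_algebraMap_eval (A := ℂ) x f)
  have hcont (f : ℝ[X]) : Continuous fun y => ‖aeval (path y) f‖ := by
    fun_prop
  have hlim : K * ‖aeval (path 0) q‖ ≤ ‖aeval (path 0) r‖ :=
    le_on_closure (s := {0}ᶜ) hoff ((hcont q).const_mul K).continuousOn (hcont r).continuousOn
      (dense_compl_singleton 0 0)
  have hrx : ¬ r.IsRoot x := by
    intro hr
    rw [hreal, hreal, hr.eq_zero, abs_zero] at hlim
    exact absurd hlim (mul_pos hK (abs_pos.2 hqx)).not_ge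
  have hr : r ≠ 0 := by
    rintro rfl
    exact hrx eval_zero
  rw [rootMultiplicity_mul (mul_ne_zero (X_sub_C_ne_zero x) hr), rootMultiplicity_X_sub_C_self,
    rootMultiplicity_eq_zero hrx]

theorem splits_of_aeval_ne_zero {p : ℝ[X]} (h : ∀ z : ℂ, z.im ≠ 0 → aeval z p ≠ 0) :
    p.Splits := by
  refine Splits.of_splits_map (algebraMap ℝ ℂ) (IsAlgClosed.splits _) fun z hz => ?_
  have hroot : aeval z p = 0 := by simpa [eval_map_algebraMap] using isRoot_of_mem_roots hz
  have him : z.im = 0 := not_imp_not.1 (h z) hroot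
  exact ⟨z.re, Complex.ext rfl him.symm⟩

theorem exists_strictMono_mem_range_iff_isRoot {K : Type*} [Field K] [LinearOrder K] {p : K[X]}
    (hsplits : p.Splits) (hsimple : ∀ z, p.IsRoot z → p.rootMultiplicity z = 1)
    {n : ℕ} (hdeg : p.natDegree = n) :
    ∃ lam : Fin n → K, StrictMono lam ∧ ∀ z, z ∈ Set.range lam ↔ p.IsRoot z := by
  have hp : p ≠ 0 := by
    rintro rfl
    simpa using hsimple 0
  have hnodup : p.roots.Nodup := by
    refine Multiset.nodup_iff_count_eq_one.2 fun z hz => ?_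
    rw [count_roots, hsimple z (isRoot_of_mem_roots hz)]
  have hcard : p.roots.toFinset.card = n := by
    rw [Multiset.toFinset_card_of_nodup hnodup, ← hsplits.natDegree_eq_card_roots, hdeg]
  refine ⟨p.roots.toFinset.orderEmbOfFin hcard, OrderEmbedding.strictMono _, fun z => ?_⟩
  rw [Finset.range_orderEmbOfFin, Finset.mem_coe, Multiset.mem_toFinset, mem_roots hp]

end PolynomialRoots

/-- The 2-jet `(φ, φ_x, φ_xx)` of a solution of the cubic string at a point. The entries lie in an
`ℝ`-algebra, so that the spectral parameter can be a number or the polynomial variable. -/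
@[ext]
structure Jet (K : Type*) where
  φ : K
  φx : K
  φxx : K

namespace Jet

variable {K L : Type*} [CommRing K] [Algebra ℝ K] [CommRing L] [Algebra ℝ L]

/-- The jet as a column vector, on which the transfer matrices act. -/
def toVec (v : Jet K) : Fin 3 → K := ![v.φ, v.φx, v.φxx]

/-- Entrywise application of an algebra homomorphism, used to specialize the spectral parameter. -/
def map (f : K →ₐ[ℝ] L) (v : Jet K) : Jet L := ⟨f v.φ, f v.φx, f v.φxx⟩

/-- Transport of a jet across a gap of length `l`: the action of `L_k`. -/
noncomputable def gap (l : ℝ) (v : Jet K) : Jet K :=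
  ⟨v.φ + l • v.φx + (l ^ 2 / 2) • v.φxx, v.φx + l • v.φxx, v.φxx⟩

/-- Transport of a jet across a point mass of weight `μ = 2 m`, with spectral parameter `t = -z`:
the action of `G_k(z)`. -/
def mass (t : K) (μ : ℝ) (v : Jet K) : Jet K := ⟨v.φ, v.φx, v.φxx + μ • (t * v.φ)⟩

/-- One step along the cyclic sequence `φ, φ_x, φ_xx, t φ, t φ_x, …`. -/
def rotate (t : K) (v : Jet K) : Jet K := ⟨v.φx, v.φxx, t * v.φ⟩

/-- The elementary step from which, up to rotation, `gap` and `mass` are composed. -/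
def shear (s : ℝ) (v : Jet K) : Jet K := ⟨v.φ + s • v.φx, v.φx, v.φxx⟩

/-- The middle elementary step, which is `shear` conjugated by `rotate`. -/
def shearMid (s : ℝ) (v : Jet K) : Jet K := ⟨v.φ, v.φx + s • v.φxx, v.φxx⟩

theorem gap_eq_shear_shearMid_shear (l : ℝ) (v : Jet K) :
    v.gap l = ((v.shear (l / 2)).shearMid l).shear (l / 2) := by
  ext <;> simp only [gap, shear, shearMid]
  module

theorem rotate_shearMid (t : K) (s : ℝ) (v : Jet K) :
    (v.shearMid s).rotate t = (v.rotate t).shear s := rfl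

theorem rotate_rotate_mass (t : K) (μ : ℝ) (v : Jet K) :
    ((v.mass t μ).rotate t).rotate t = ((v.rotate t).rotate t).shear μ := rfl

theorem map_gap (f : K →ₐ[ℝ] L) (l : ℝ) (v : Jet K) : (v.gap l).map f = (v.map f).gap l := by
  simp [map, gap]

theorem map_mass (f : K →ₐ[ℝ] L) (t : K) (μ : ℝ) (v : Jet K) :
    (v.mass t μ).map f = (v.map f).mass (f t) μ := by
  simp [map, mass]

/-- A property of jets that is preserved by the elementary step and by rotation, and hence by
gaps and masses; this is how the positivity of gaps and masses enters. -/
structure IsCyclicInvariant (t : K) (P : Jet K → Prop) : Prop where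
  rotate_iff : ∀ v, P (v.rotate t) ↔ P v
  shear : ∀ s, 0 ≤ s → ∀ v, P v → P (v.shear s)

namespace IsCyclicInvariant

variable {t : K} {P : Jet K → Prop} {v : Jet K} {s : ℝ}

theorem shearMid (hP : IsCyclicInvariant t P) (hs : 0 ≤ s) (hv : P v) : P (v.shearMid s) := by
  rw [← hP.rotate_iff, rotate_shearMid]
  exact hP.shear s hs _ ((hP.rotate_iff v).2 hv)

theorem mass (hP : IsCyclicInvariant t P) (hs : 0 ≤ s) (hv : P v) : P (v.mass t s) := by
  rw [← hP.rotate_iff, ← hP.rotate_iff, rotate_rotate_mass]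
  exact hP.shear s hs _ ((hP.rotate_iff _).2 ((hP.rotate_iff v).2 hv))

theorem gap (hP : IsCyclicInvariant t P) (hs : 0 ≤ s) (hv : P v) : P (v.gap s) := by
  have hhalf : 0 ≤ s / 2 := by positivity
  rw [gap_eq_shear_shearMid_shear]
  exact hP.shear _ hhalf _ (hP.shearMid hs (hP.shear _ hhalf _ hv))

end IsCyclicInvariant

end Jet

section Complex

attribute [local instance] Complex.finrank_real_complex_fact

local notation "ω" => Complex.orientation.areaForm

theorem areaForm_mul_mul (t w z : ℂ) : ω (t * w) (t * z) = Complex.normSq t * ω w z := by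
  simp only [Complex.areaForm, map_mul, Complex.mul_re, Complex.mul_im, Complex.conj_re,
    Complex.conj_im, Complex.normSq_apply]
  ring

theorem areaForm_self_mul (t w : ℂ) : ω w (t * w) = t.im * ‖w‖ ^ 2 := by
  simp only [Complex.areaForm, Complex.mul_re, Complex.mul_im, Complex.conj_re,
    Complex.conj_im, ← Complex.normSq_eq_norm_sq, Complex.normSq_apply]
  ring

namespace Jet

/-- The entries `φ, φ_x, φ_xx, t φ, t φ_x, …` turn counterclockwise, by at most a half turn in any
two consecutive steps. Up to a factor `|t| ^ 2`, the six pairs listed are all pairs of entries at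
distance one or two in the cyclic sequence. -/
structure IsInterlaced (t : ℂ) (v : Jet ℂ) : Prop where
  φ_φx : 0 ≤ ω v.φ v.φx
  φ_φxx : 0 ≤ ω v.φ v.φxx
  φx_φxx : 0 ≤ ω v.φx v.φxx
  φx_mul_φ : 0 ≤ ω v.φx (t * v.φ)
  φxx_mul_φ : 0 ≤ ω v.φxx (t * v.φ)
  φxx_mul_φx : 0 ≤ ω v.φxx (t * v.φx)

variable {t : ℂ} {v : Jet ℂ} {s : ℝ}

theorem isInterlaced_rotate_iff (ht : t ≠ 0) : IsInterlaced t (v.rotate t) ↔ IsInterlaced t v := by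
  have hscale (w z : ℂ) : 0 ≤ ω (t * w) (t * z) ↔ 0 ≤ ω w z := by
    rw [areaForm_mul_mul, mul_nonneg_iff_of_pos_left (Complex.normSq_pos.2 ht)]
  constructor
  · rintro ⟨h₁, h₂, h₃, h₄, h₅, h₆⟩
    exact ⟨(hscale _ _).1 h₅, (hscale _ _).1 h₆, h₁, h₂, h₃, h₄⟩
  · rintro ⟨h₁, h₂, h₃, h₄, h₅, h₆⟩
    exact ⟨h₃, h₄, h₅, h₆, (hscale _ _).2 h₁, (hscale _ _).2 h₂⟩

theorem IsInterlaced.shear (hv : IsInterlaced t v) (ht : 0 ≤ t.im) (hs : 0 ≤ s) :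
    IsInterlaced t (v.shear s) := by
  obtain ⟨h₁, h₂, h₃, h₄, h₅, h₆⟩ := hv
  have hturn : 0 ≤ ω v.φx (t * v.φx) := by
    rw [areaForm_self_mul]
    positivity
  constructor <;>
    simp only [Jet.shear, mul_add, mul_smul_comm, map_add, map_smul, LinearMap.add_apply,
      LinearMap.smul_apply, smul_eq_mul, Complex.orientation.areaForm_apply_self] <;>
    positivity

theorem isCyclicInvariant_isInterlaced (ht : 0 < t.im) :
    IsCyclicInvariant t (IsInterlaced t) where
  rotate_iff _ := isInterlaced_rotate_iff (by rintro rfl; simp at ht)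
  shear _ hs _ hv := hv.shear ht.le hs

theorem IsInterlaced.shear_φ_ne_zero (hv : IsInterlaced t v) (ht : 0 < t.im) (hs : 0 ≤ s)
    (hφ : v.φ ≠ 0) : (v.shear s).φ ≠ 0 := by
  intro hzero
  have hφ_eq : v.φ = -(s • v.φx) := eq_neg_of_add_eq_zero_left hzero
  have hturn : ω (s • v.φx) (t * v.φ) = -(t.im * ‖v.φ‖ ^ 2) := by
    rw [← areaForm_self_mul, hφ_eq]
    simp
  have hnonneg : 0 ≤ ω (s • v.φx) (t * v.φ) := by
    rw [map_smul, LinearMap.smul_apply]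
    exact mul_nonneg hs hv.φx_mul_φ
  have hpos : 0 < t.im * ‖v.φ‖ ^ 2 := by positivity
  linarith

theorem IsInterlaced.gap_φ_ne_zero (hv : IsInterlaced t v) (ht : 0 < t.im) (hs : 0 ≤ s)
    (hφ : v.φ ≠ 0) : (v.gap s).φ ≠ 0 := by
  have hhalf : 0 ≤ s / 2 := by positivity
  have hfirst : IsInterlaced t (v.shear (s / 2)) := hv.shear ht.le hhalf
  have hsecond := (isCyclicInvariant_isInterlaced ht).shearMid hs hfirst
  rw [gap_eq_shear_shearMid_shear]
  exact hsecond.shear_φ_ne_zero ht hhalf (hv.shear_φ_ne_zero ht hhalf hφ)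

theorem IsInterlaced.le_norm_mass_φxx (hv : IsInterlaced t v) :
    s * t.im * ‖v.φ‖ ≤ ‖(v.mass t s).φxx‖ := by
  rcases (norm_nonneg v.φ).eq_or_lt with hφ | hφ
  · simp [← hφ]
  refine le_of_mul_le_mul_left ?_ hφ
  calc ‖v.φ‖ * (s * t.im * ‖v.φ‖) = s * ω v.φ (t * v.φ) := by rw [areaForm_self_mul]; ring
    _ ≤ ω v.φ v.φxx + s * ω v.φ (t * v.φ) := le_add_of_nonneg_left hv.φ_φxx
    _ = ω v.φ (v.mass t s).φxx := by simp only [Jet.mass, map_add, map_smul, smul_eq_mul]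
    _ ≤ ‖v.φ‖ * ‖(v.mass t s).φxx‖ := Complex.orientation.areaForm_le _ _

end Jet

end Complex

namespace Jet

/-- Two neighbours in the sequence `φ, φ_x, φ_xx, t φ` have the same strict sign. For `t < 0` this
excludes three sign changes. -/
def HasSignAgreement (t : ℝ) (v : Jet ℝ) : Prop :=
  0 < v.φ * v.φx ∨ 0 < v.φx * v.φxx ∨ 0 < v.φxx * (t * v.φ)

variable {t s : ℝ} {v : Jet ℝ}

theorem hasSignAgreement_rotate_iff (ht : t ≠ 0) :
    HasSignAgreement t (v.rotate t) ↔ HasSignAgreement t v := by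
  have hscale : 0 < t * v.φ * (t * v.φx) ↔ 0 < v.φ * v.φx := by
    rw [mul_mul_mul_comm, mul_pos_iff_of_pos_left (mul_self_pos.2 ht)]
  simp only [HasSignAgreement, rotate, hscale]
  tauto

theorem HasSignAgreement.shear (hv : HasSignAgreement t v) (ht : t ≤ 0) (hs : 0 ≤ s) :
    HasSignAgreement t (v.shear s) := by
  simp only [HasSignAgreement, Jet.shear, smul_eq_mul] at hv ⊢
  by_cases hmid : 0 < v.φx * v.φxx
  · exact .inr (.inl hmid)
  rcases hv with h | h | h
  · exact .inl (by linarith [mul_nonneg hs (mul_self_nonneg v.φx)])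
  · exact absurd h hmid
  · have hprod : 0 ≤ s * (t * (v.φx * v.φxx)) :=
      mul_nonneg hs (mul_nonneg_of_nonpos_of_nonpos ht (not_lt.1 hmid))
    exact .inr (.inr (by linarith))

theorem isCyclicInvariant_hasSignAgreement (ht : t < 0) :
    IsCyclicInvariant t (HasSignAgreement t) where
  rotate_iff _ := hasSignAgreement_rotate_iff ht.ne
  shear _ hs _ hv := hv.shear ht.le hs

theorem HasSignAgreement.φ_ne_zero (hv : HasSignAgreement t v) (hφxx : v.φxx = 0) : v.φ ≠ 0 := by
  intro hφ
  simp [HasSignAgreement, hφ, hφxx] at hv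

end Jet

section Solution

variable {K L : Type*} [CommRing K] [Algebra ℝ K] [CommRing L] [Algebra ℝ L]
  {m l : ℕ → ℝ} {k : ℕ}

/-- The jet of the solution with data `(1, 0, 0)` at `-∞`, just before it meets the mass
`m (k + 1)`. -/
noncomputable def incomingJet (m l : ℕ → ℝ) (t : K) : ℕ → Jet K
  | 0 => ⟨1, 0, 0⟩
  | k + 1 => ((incomingJet m l t k).mass t (2 * m (k + 1))).gap (l (k + 1))

/-- The jet of the same solution just after the mass `m (k + 1)`, that is, after `k + 1` masses. -/
noncomputable def outgoingJet (m l : ℕ → ℝ) (t : K) (k : ℕ) : Jet K :=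
  (incomingJet m l t k).mass t (2 * m (k + 1))

theorem incomingJet_induction {t : K} {P : Jet K → Prop} (init : P ⟨1, 0, 0⟩)
    (mass : ∀ μ, 0 < μ → ∀ v, P v → P (v.mass t μ)) (gap : ∀ s, 0 < s → ∀ v, P v → P (v.gap s))
    (hl : ∀ i < k, 0 < l (i + 1)) (hm : ∀ i < k, 0 < m (i + 1)) : P (incomingJet m l t k) := by
  induction k with
  | zero => exact init
  | succ k ih =>
    have hprev := ih (fun i hi => hl i (by omega)) (fun i hi => hm i (by omega))
    have hmass : 0 < 2 * m (k + 1) := mul_pos two_pos (hm k k.lt_succ_self)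
    exact gap _ (hl k k.lt_succ_self) _ (mass _ hmass _ hprev)

theorem map_incomingJet (f : K →ₐ[ℝ] L) (m l : ℕ → ℝ) (t : K) (k : ℕ) :
    (incomingJet m l t k).map f = incomingJet m l (f t) k := by
  induction k with
  | zero => simp [incomingJet, Jet.map]
  | succ k ih => rw [incomingJet, Jet.map_gap, Jet.map_mass, ih, incomingJet]

theorem map_outgoingJet (f : K →ₐ[ℝ] L) (m l : ℕ → ℝ) (t : K) (k : ℕ) :
    (outgoingJet m l t k).map f = outgoingJet m l (f t) k := by
  rw [outgoingJet, Jet.map_mass, map_incomingJet, outgoingJet]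

theorem incomingJet_zero_right (m l : ℕ → ℝ) (k : ℕ) :
    incomingJet m l (0 : K) k = ⟨1, 0, 0⟩ := by
  induction k with
  | zero => rfl
  | succ k ih => simp [incomingJet, ih, Jet.mass, Jet.gap]

section Real

variable {t : ℝ}

theorem incomingJet_pos (ht : 0 < t) (hl : ∀ i < k, 0 < l (i + 1)) (hm : ∀ i < k, 0 < m (i + 1)) :
    0 < (incomingJet m l t k).φ ∧ 0 ≤ (incomingJet m l t k).φx ∧
      0 ≤ (incomingJet m l t k).φxx := by
  refine incomingJet_induction (P := fun v => 0 < v.φ ∧ 0 ≤ v.φx ∧ 0 ≤ v.φxx)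
    (by simp) ?_ ?_ hl hm
  · rintro μ hμ v ⟨h₁, h₂, h₃⟩
    exact ⟨h₁, h₂, by simp only [Jet.mass, smul_eq_mul]; positivity⟩
  · rintro s hs v ⟨h₁, h₂, h₃⟩
    simp only [Jet.gap, smul_eq_mul]
    exact ⟨by positivity, by positivity, h₃⟩

theorem outgoingJet_φxx_pos (ht : 0 < t) (hl : ∀ i < k, 0 < l (i + 1))
    (hm : ∀ i < k + 1, 0 < m (i + 1)) : 0 < (outgoingJet m l t k).φxx := by
  obtain ⟨hφ, -, hφxx⟩ := incomingJet_pos ht hl fun i hi => hm i (by omega)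
  have hmk : 0 < m (k + 1) := hm k k.lt_succ_self
  simp only [outgoingJet, Jet.mass, smul_eq_mul]
  positivity

theorem hasSignAgreement_outgoingJet (ht : t < 0) (hl : ∀ i < k, 0 < l (i + 1))
    (hm : ∀ i < k + 1, 0 < m (i + 1)) : (outgoingJet m l t k).HasSignAgreement t := by
  have hinv := Jet.isCyclicInvariant_hasSignAgreement ht
  have hmass (μ : ℝ) (hμ : 0 < μ) (v : Jet ℝ) (hv : v = ⟨1, 0, 0⟩ ∨ v.HasSignAgreement t) :
      (v.mass t μ).HasSignAgreement t := by
    rcases hv with rfl | hv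
    · right; right
      have : 0 < μ * (t * t) := mul_pos hμ (mul_self_pos.2 ht.ne)
      simpa [Jet.mass, mul_assoc] using this
    · exact hinv.mass hμ.le hv
  refine hmass _ (mul_pos two_pos (hm k k.lt_succ_self)) _ ?_
  refine incomingJet_induction (P := fun v => v = ⟨1, 0, 0⟩ ∨ v.HasSignAgreement t) (.inl rfl)
    (fun μ hμ v hv => .inr (hmass μ hμ v hv)) ?_ hl fun i hi => hm i (by omega)
  rintro s hs v (rfl | hv)
  · left; simp [Jet.gap]
  · exact .inr (hinv.gap hs.le hv)

theorem incomingJet_φ_ne_zero_of_outgoingJet_φxx_eq_zero (hl : ∀ i < k, 0 < l (i + 1))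
    (hm : ∀ i < k + 1, 0 < m (i + 1)) (h : (outgoingJet m l t k).φxx = 0) :
    (incomingJet m l t k).φ ≠ 0 := by
  rcases lt_trichotomy t 0 with ht | rfl | ht
  · exact (hasSignAgreement_outgoingJet ht hl hm).φ_ne_zero h
  · simp [incomingJet_zero_right]
  · exact absurd h (outgoingJet_φxx_pos ht hl hm).ne'

end Real

section Complex

variable {t : ℂ}

theorem isInterlaced_incomingJet_and_φ_ne_zero (ht : 0 < t.im) (hl : ∀ i < k, 0 < l (i + 1))
    (hm : ∀ i < k, 0 < m (i + 1)) :
    (incomingJet m l t k).IsInterlaced t ∧ (incomingJet m l t k).φ ≠ 0 := by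
  have hinv := Jet.isCyclicInvariant_isInterlaced ht
  refine incomingJet_induction (P := fun v => v.IsInterlaced t ∧ v.φ ≠ 0)
    ⟨by constructor <;> simp, one_ne_zero⟩ ?_ ?_ hl hm
  · rintro μ hμ v ⟨hv, hφ⟩
    exact ⟨hinv.mass hμ.le hv, hφ⟩
  · rintro s hs v ⟨hv, hφ⟩
    exact ⟨hinv.gap hs.le hv, hv.gap_φ_ne_zero ht hs.le hφ⟩

theorem norm_incomingJet_conj_φ (m l : ℕ → ℝ) (t : ℂ) (k : ℕ) :
    ‖(incomingJet m l (starRingEnd ℂ t) k).φ‖ = ‖(incomingJet m l t k).φ‖ := by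
  have h := congrArg Jet.φ (map_incomingJet (Complex.conjAe : ℂ →ₐ[ℝ] ℂ) m l t k)
  simpa [Jet.map] using congrArg norm h.symm

theorem norm_outgoingJet_conj_φxx (m l : ℕ → ℝ) (t : ℂ) (k : ℕ) :
    ‖(outgoingJet m l (starRingEnd ℂ t) k).φxx‖ = ‖(outgoingJet m l t k).φxx‖ := by
  have h := congrArg Jet.φxx (map_outgoingJet (Complex.conjAe : ℂ →ₐ[ℝ] ℂ) m l t k)
  simpa [Jet.map] using congrArg norm h.symm

theorem incomingJet_φ_ne_zero_of_im_ne_zero (ht : t.im ≠ 0) (hl : ∀ i < k, 0 < l (i + 1))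
    (hm : ∀ i < k, 0 < m (i + 1)) : (incomingJet m l t k).φ ≠ 0 := by
  rcases ht.lt_or_gt with ht | ht
  · rw [← norm_ne_zero_iff, ← norm_incomingJet_conj_φ, norm_ne_zero_iff]
    exact (isInterlaced_incomingJet_and_φ_ne_zero (by simpa using ht) hl hm).2
  · exact (isInterlaced_incomingJet_and_φ_ne_zero ht hl hm).2

theorem mul_norm_incomingJet_φ_le (t : ℂ) (hl : ∀ i < k, 0 < l (i + 1))
    (hm : ∀ i < k, 0 < m (i + 1)) :
    2 * m (k + 1) * |t.im| * ‖(incomingJet m l t k).φ‖ ≤ ‖(outgoingJet m l t k).φxx‖ := by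
  have hupper {u : ℂ} (hu : 0 < u.im) :
      2 * m (k + 1) * |u.im| * ‖(incomingJet m l u k).φ‖ ≤ ‖(outgoingJet m l u k).φxx‖ := by
    rw [abs_of_pos hu]
    exact (isInterlaced_incomingJet_and_φ_ne_zero hu hl hm).1.le_norm_mass_φxx
  rcases lt_trichotomy t.im 0 with ht | ht | ht
  · have hconj := hupper (u := starRingEnd ℂ t) (by simpa using ht)
    rwa [norm_incomingJet_conj_φ, norm_outgoingJet_conj_φxx, Complex.conj_im, abs_neg] at hconj
  · simp [ht]
  · exact hupper ht

end Complex

end Solution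

section Polynomial

variable {K : Type*} [CommRing K] [Algebra ℝ K] {m l : ℕ → ℝ} {k : ℕ}

theorem Jet.degree_mass_φxx {v : Jet ℝ[X]} {μ : ℝ} (hμ : μ ≠ 0) (hφ : v.φ.degree = k)
    (hφxx : v.φxx.degree ≤ k) : (v.mass (-X) μ).φxx.degree = (k + 1 : ℕ) := by
  have hterm : (μ • (-X * v.φ)).degree = ((k + 1 : ℕ) : WithBot ℕ) := by
    rw [smul_eq_C_mul, degree_C_mul hμ, degree_mul, degree_neg, degree_X, hφ, add_comm]
    rfl
  have hlt : v.φxx.degree < (μ • (-X * v.φ)).degree := by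
    rw [hterm]
    exact hφxx.trans_lt (by exact_mod_cast k.lt_succ_self)
  rw [Jet.mass, degree_add_eq_right_of_degree_lt hlt, hterm]

theorem Jet.degree_gap_φ {v : Jet ℝ[X]} {s : ℝ} (hs : s ≠ 0) (hφ : v.φ.degree < v.φxx.degree)
    (hφx : v.φx.degree < v.φxx.degree) : (v.gap s).φ.degree = v.φxx.degree := by
  have hterm : ((s ^ 2 / 2) • v.φxx).degree = v.φxx.degree := by
    rw [smul_eq_C_mul, degree_C_mul (by positivity)]
  have hlt : (v.φ + s • v.φx).degree < ((s ^ 2 / 2) • v.φxx).degree := by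
    rw [hterm]
    exact (degree_add_le _ _).trans_lt (max_lt hφ ((degree_smul_le _ _).trans_lt hφx))
  rw [Jet.gap, degree_add_eq_right_of_degree_lt hlt, hterm]

theorem degree_incomingJet (hl : ∀ i < k, l (i + 1) ≠ 0) (hm : ∀ i < k, m (i + 1) ≠ 0) :
    (incomingJet m l (-X : ℝ[X]) k).φ.degree = k ∧
      (incomingJet m l (-X : ℝ[X]) k).φx.degree ≤ k ∧
      (incomingJet m l (-X : ℝ[X]) k).φxx.degree ≤ k := by
  induction k with
  | zero => simp [incomingJet]
  | succ k ih =>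
    obtain ⟨hφ, hφx, hφxx⟩ := ih (fun i hi => hl i (by omega)) (fun i hi => hm i (by omega))
    set v := (incomingJet m l (-X : ℝ[X]) k).mass (-X) (2 * m (k + 1)) with hv
    have hdeg : v.φxx.degree = (k + 1 : ℕ) :=
      Jet.degree_mass_φxx (mul_ne_zero two_ne_zero (hm k k.lt_succ_self)) hφ hφxx
    have hlt : ((k : ℕ) : WithBot ℕ) < (k + 1 : ℕ) := by exact_mod_cast k.lt_succ_self
    rw [incomingJet, ← hv]
    refine ⟨?_, ?_, hdeg.le⟩
    · rw [Jet.degree_gap_φ (hl k k.lt_succ_self), hdeg]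
      · exact hdeg ▸ hφ.trans_lt hlt
      · exact hdeg ▸ hφx.trans_lt hlt
    · exact (degree_add_le _ _).trans
        (max_le (hφx.trans hlt.le) ((degree_smul_le _ _).trans hdeg.le))

/-- The polynomial `A(z)` of a string with `k + 1` masses. -/
noncomputable def spectralPoly (m l : ℕ → ℝ) (k : ℕ) : ℝ[X] :=
  (outgoingJet m l (-X : ℝ[X]) k).φxx

theorem degree_spectralPoly (hl : ∀ i < k, l (i + 1) ≠ 0) (hm : ∀ i < k + 1, m (i + 1) ≠ 0) :
    (spectralPoly m l k).degree = (k + 1 : ℕ) := by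
  obtain ⟨hφ, -, hφxx⟩ := degree_incomingJet hl fun i hi => hm i (by omega)
  exact Jet.degree_mass_φxx (mul_ne_zero two_ne_zero (hm k k.lt_succ_self)) hφ hφxx

theorem aeval_incomingJet_φ (m l : ℕ → ℝ) (k : ℕ) (z : K) :
    aeval z (incomingJet m l (-X : ℝ[X]) k).φ = (incomingJet m l (-z) k).φ := by
  simpa [Jet.map] using congrArg Jet.φ (map_incomingJet (aeval z) m l (-X : ℝ[X]) k)

theorem aeval_spectralPoly (m l : ℕ → ℝ) (k : ℕ) (z : K) :
    aeval z (spectralPoly m l k) = (outgoingJet m l (-z) k).φxx := by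
  simpa [Jet.map, spectralPoly] using
    congrArg Jet.φxx (map_outgoingJet (aeval z) m l (-X : ℝ[X]) k)

theorem isRoot_spectralPoly_iff {z : ℝ} :
    (spectralPoly m l k).IsRoot z ↔ (outgoingJet m l (-z) k).φxx = 0 := by
  rw [← aeval_spectralPoly, coe_aeval_eq_eval, IsRoot.def]

theorem isRoot_spectralPoly_zero (m l : ℕ → ℝ) (k : ℕ) : (spectralPoly m l k).IsRoot 0 := by
  rw [isRoot_spectralPoly_iff, neg_zero, outgoingJet, incomingJet_zero_right]
  simp [Jet.mass]

theorem nonneg_of_isRoot_spectralPoly {z : ℝ} (hl : ∀ i < k, 0 < l (i + 1))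
    (hm : ∀ i < k + 1, 0 < m (i + 1)) (hz : (spectralPoly m l k).IsRoot z) : 0 ≤ z := by
  by_contra! hneg
  exact (outgoingJet_φxx_pos (neg_pos.2 hneg) hl hm).ne' (isRoot_spectralPoly_iff.1 hz)

theorem le_norm_aeval_spectralPoly (hl : ∀ i < k, 0 < l (i + 1)) (hm : ∀ i < k, 0 < m (i + 1))
    (z : ℂ) :
    2 * m (k + 1) * |z.im| * ‖aeval z (incomingJet m l (-X : ℝ[X]) k).φ‖ ≤
      ‖aeval z (spectralPoly m l k)‖ := by
  simpa [aeval_incomingJet_φ, aeval_spectralPoly] using mul_norm_incomingJet_φ_le (-z) hl hm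

theorem splits_spectralPoly (hl : ∀ i < k, 0 < l (i + 1)) (hm : ∀ i < k + 1, 0 < m (i + 1)) :
    (spectralPoly m l k).Splits := by
  have hm' : ∀ i < k, 0 < m (i + 1) := fun i hi => hm i (by omega)
  have hmk : 0 < m (k + 1) := hm k k.lt_succ_self
  refine splits_of_aeval_ne_zero fun z hz => norm_pos_iff.1 ?_
  refine lt_of_lt_of_le ?_ (le_norm_aeval_spectralPoly hl hm' z)
  have hφ : aeval z (incomingJet m l (-X : ℝ[X]) k).φ ≠ 0 := by
    rw [aeval_incomingJet_φ]
    exact incomingJet_φ_ne_zero_of_im_ne_zero (by simpa using hz) hl hm'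
  positivity

theorem rootMultiplicity_spectralPoly {z : ℝ} (hl : ∀ i < k, 0 < l (i + 1))
    (hm : ∀ i < k + 1, 0 < m (i + 1)) (hz : (spectralPoly m l k).IsRoot z) :
    (spectralPoly m l k).rootMultiplicity z = 1 := by
  refine rootMultiplicity_eq_one_of_le_norm_aeval (mul_pos two_pos (hm k k.lt_succ_self))
    (le_norm_aeval_spectralPoly hl fun i hi => hm i (by omega)) hz ?_
  rw [← coe_aeval_eq_eval, aeval_incomingJet_φ]
  exact incomingJet_φ_ne_zero_of_outgoingJet_φxx_eq_zero hl hm (isRoot_spectralPoly_iff.1 hz)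

end Polynomial

section TransferMatrix

theorem Lmat_mulVec_toVec (s : ℝ) (v : Jet ℝ[X]) : Lmat s *ᵥ v.toVec = (v.gap s).toVec := by
  ext1 i
  fin_cases i <;>
    simp [Lmat, Jet.toVec, Jet.gap, mulVec, dotProduct, Fin.sum_univ_three, smul_eq_C_mul]

theorem Gmat_mulVec_toVec (μ : ℝ) (v : Jet ℝ[X]) :
    Gmat μ *ᵥ v.toVec = (v.mass (-X) (2 * μ)).toVec := by
  ext1 i
  fin_cases i <;>
    simp [Gmat, Jet.toVec, Jet.mass, mulVec, dotProduct, Fin.sum_univ_three, smul_eq_C_mul,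
      mul_assoc, add_comm]

theorem transMat_mulVec (m l : ℕ → ℝ) (k : ℕ) :
    transMat m l (k + 1) *ᵥ ![1, 0, 0] = (outgoingJet m l (-X) k).toVec := by
  induction k with
  | zero => exact Gmat_mulVec_toVec (m 1) ⟨1, 0, 0⟩
  | succ k ih =>
    rw [transMat, Matrix.mul_assoc, ← mulVec_mulVec, ← mulVec_mulVec, ih, Lmat_mulVec_toVec,
      Gmat_mulVec_toVec]
    rfl

end TransferMatrix

/-- **The spectrum of the Neumann-like discrete cubic string is nonnegative and simple.**
If `x_1 < ⋯ < x_n` and all masses `m_k > 0`, then the polynomial `A(z)` (the third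
entry of `S(z)(1,0,0)ᵗ`) has degree `n`, and it has exactly `n` distinct real roots
`0 = λ_0 < λ_1 < ⋯ < λ_{n−1}`, each simple (root multiplicity one); in particular all
roots are real, simple and nonnegative. -/
theorem stmt3 (n : ℕ) (hn : 1 ≤ n) (x m : ℕ → ℝ)
    (hx : ∀ i, 1 ≤ i → i < n → x i < x (i + 1))
    (hm : ∀ i, 1 ≤ i → i ≤ n → 0 < m i)
    (A : Polynomial ℝ)
    (hA : A = (transMat m (fun k => x (k + 1) - x k) n).mulVec ![1, 0, 0] 2) :
    A.natDegree = n ∧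
    ∃ lam : Fin n → ℝ, StrictMono lam ∧ lam ⟨0, hn⟩ = 0 ∧
      (∀ i, A.IsRoot (lam i)) ∧
      (∀ i, A.rootMultiplicity (lam i) = 1) ∧
      (∀ z : ℝ, A.IsRoot z → ∃ i, z = lam i) := by
  obtain ⟨k, rfl⟩ : ∃ k, n = k + 1 := ⟨n - 1, by omega⟩
  set l : ℕ → ℝ := fun k => x (k + 1) - x k
  have hl : ∀ i < k, 0 < l (i + 1) := fun i hi => sub_pos.2 (hx (i + 1) (by omega) (by omega))
  have hm' : ∀ i < k + 1, 0 < m (i + 1) := fun i hi => hm (i + 1) (by omega) (by omega)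
  obtain rfl : A = spectralPoly m l k := by rw [hA, transMat_mulVec]; rfl
  have hnatDegree : (spectralPoly m l k).natDegree = k + 1 := natDegree_eq_of_degree_eq_some
    (degree_spectralPoly (fun i hi => (hl i hi).ne') (fun i hi => (hm' i hi).ne'))
  obtain ⟨lam, hmono, hrange⟩ := exists_strictMono_mem_range_iff_isRoot
    (splits_spectralPoly hl hm') (fun _ => rootMultiplicity_spectralPoly hl hm') hnatDegree
  have hroot (i : Fin (k + 1)) : (spectralPoly m l k).IsRoot (lam i) := (hrange _).1 ⟨i, rfl⟩
  obtain ⟨i, hi⟩ := (hrange 0).2 (isRoot_spectralPoly_zero m l k)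
  have hfirst : lam ⟨0, hn⟩ ≤ 0 := hi ▸ hmono.monotone (Fin.zero_le i)
  refine ⟨hnatDegree, lam, hmono, ?_, hroot, ?_, ?_⟩
  · exact hfirst.antisymm (nonneg_of_isRoot_spectralPoly hl hm' (hroot _))
  · exact fun i => rootMultiplicity_spectralPoly hl hm' (hroot i)
  · exact fun z hz => ((hrange z).2 hz).imp fun _ => Eq.symm
end

section
/- Let n ≥ 2, let x_1 < ⋯ < x_n be real and m_1, …, m_n > 0, set l_k = x_{k+1} − x_k, and let (C(z), B(z), A(z))ᵗ = S(z)(1,0,0)ᵗ, where S(z) = G_n(z) L_{n−1} G_{n−1}(z) ⋯ L_1 G_1(z) with L_k = [[1, l_k, l_k²/2],[0,1,l_k],[0,0,1]] and G_k(z) = [[1,0,0],[0,1,0],[−2 m_k z,0,1]]. Then for every nonzero root λ of A (these roots are real, positive and simple), the residue b = B(λ)/A'(λ) of W = B/A at λ satisfies b < 0; equivalently, B(λ) · A'(λ) < 0. -/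
open Polynomial Matrix

/-!
Write `v = (C, B, A)` for the state `S(z)(1, 0, 0)ᵗ` of the string. Adding point masses one at a
time keeps six Wronskians nonnegative at every real `z`: those saying that the ratios `C / B`,
`C / A`, `B / A`, and the same ratios multiplied by `z`, are nondecreasing in `z`. Each `L_k` and
`G_k` replaces these Wronskians by combinations of them with nonnegative coefficients, plus squares.
For `z ≠ 0`, the squares produced by one factor `L_k` followed by one factor `G_{k+1}` force the
Wronskian `A B' - A' B` to be positive, and at a zero of `A` it equals `-A' B`.
-/

lemma wronskian_X_mul_right {R : Type*} [CommRing R] (p q : R[X]) :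
    wronskian p (X * q) = X * wronskian p q + p * q := by
  rw [wronskian, wronskian, derivative_mul, derivative_X]
  ring

lemma eval_wronskian {R : Type*} [CommRing R] (p q : R[X]) (z : R) :
    (wronskian p q).eval z = p.eval z * q.derivative.eval z - p.derivative.eval z * q.eval z := by
  rw [wronskian, eval_sub, eval_mul, eval_mul]

lemma eval_wronskian_of_isRoot {R : Type*} [CommRing R] {p : R[X]} {z : R} (hp : p.IsRoot z)
    (q : R[X]) : (wronskian p q).eval z = -(q.eval z * p.derivative.eval z) := by
  rw [eval_wronskian, hp.eq_zero]
  ring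

section TransferMatrices

variable (l m z : ℝ) (v : Fin 3 → ℝ[X])

lemma eval_Lmat_mulVec (i : Fin 3) :
    ((Lmat l *ᵥ v) i).eval z =
      ![(v 0).eval z + l * (v 1).eval z + l ^ 2 / 2 * (v 2).eval z,
        (v 1).eval z + l * (v 2).eval z, (v 2).eval z] i := by
  fin_cases i <;> simp [Lmat, mulVec, dotProduct, Fin.sum_univ_three]

lemma eval_derivative_Lmat_mulVec (i : Fin 3) :
    (derivative ((Lmat l *ᵥ v) i)).eval z =
      ![(derivative (v 0)).eval z + l * (derivative (v 1)).eval z +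
          l ^ 2 / 2 * (derivative (v 2)).eval z,
        (derivative (v 1)).eval z + l * (derivative (v 2)).eval z,
        (derivative (v 2)).eval z] i := by
  fin_cases i <;> simp [Lmat, mulVec, dotProduct, Fin.sum_univ_three]

lemma eval_Gmat_mulVec (i : Fin 3) :
    ((Gmat m *ᵥ v) i).eval z =
      ![(v 0).eval z, (v 1).eval z, (v 2).eval z - 2 * m * z * (v 0).eval z] i := by
  fin_cases i <;> simp [Gmat, mulVec, dotProduct, Fin.sum_univ_three, sub_eq_neg_add]

lemma eval_derivative_Gmat_mulVec (i : Fin 3) :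
    (derivative ((Gmat m *ᵥ v) i)).eval z =
      ![(derivative (v 0)).eval z, (derivative (v 1)).eval z,
        (derivative (v 2)).eval z -
          2 * m * ((v 0).eval z + z * (derivative (v 0)).eval z)] i := by
  fin_cases i <;> simp [Gmat, mulVec, dotProduct, Fin.sum_univ_three, mul_add, mul_assoc,
    sub_eq_neg_add, add_assoc]

lemma eval_wronskian_Lmat_mulVec_one_zero :
    (wronskian ((Lmat l *ᵥ v) 1) ((Lmat l *ᵥ v) 0)).eval z =
      (wronskian (v 1) (v 0)).eval z + l * (wronskian (v 2) (v 0)).eval z +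
        l ^ 2 / 2 * (wronskian (v 2) (v 1)).eval z := by
  simp only [eval_wronskian, eval_Lmat_mulVec, eval_derivative_Lmat_mulVec, cons_val]
  ring

lemma eval_wronskian_Lmat_mulVec_two_zero :
    (wronskian ((Lmat l *ᵥ v) 2) ((Lmat l *ᵥ v) 0)).eval z =
      (wronskian (v 2) (v 0)).eval z + l * (wronskian (v 2) (v 1)).eval z := by
  simp only [eval_wronskian, eval_Lmat_mulVec, eval_derivative_Lmat_mulVec, cons_val]
  ring

lemma eval_wronskian_Lmat_mulVec_two_one :
    (wronskian ((Lmat l *ᵥ v) 2) ((Lmat l *ᵥ v) 1)).eval z =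
      (wronskian (v 2) (v 1)).eval z := by
  simp only [eval_wronskian, eval_Lmat_mulVec, eval_derivative_Lmat_mulVec, cons_val]
  ring

lemma eval_wronskian_Lmat_mulVec_one_X_mul_zero :
    (wronskian ((Lmat l *ᵥ v) 1) (X * (Lmat l *ᵥ v) 0)).eval z =
      (wronskian (v 1) (X * v 0)).eval z + l * (wronskian (v 2) (X * v 0)).eval z +
        l ^ 2 / 2 * (wronskian (v 2) (X * v 1)).eval z +
        l * (((v 1).eval z + l / 2 * (v 2).eval z) ^ 2 + (l / 2 * (v 2).eval z) ^ 2) := by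
  simp only [wronskian_X_mul_right, eval_add, eval_mul, eval_X, eval_wronskian,
    eval_Lmat_mulVec, eval_derivative_Lmat_mulVec, cons_val]
  ring

lemma eval_wronskian_Lmat_mulVec_two_X_mul_zero :
    (wronskian ((Lmat l *ᵥ v) 2) (X * (Lmat l *ᵥ v) 0)).eval z =
      (wronskian (v 2) (X * v 0)).eval z + l * (wronskian (v 2) (X * v 1)).eval z +
        l ^ 2 / 2 * (v 2).eval z ^ 2 := by
  simp only [wronskian_X_mul_right, eval_add, eval_mul, eval_X, eval_wronskian,
    eval_Lmat_mulVec, eval_derivative_Lmat_mulVec, cons_val]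
  ring

lemma eval_wronskian_Lmat_mulVec_two_X_mul_one :
    (wronskian ((Lmat l *ᵥ v) 2) (X * (Lmat l *ᵥ v) 1)).eval z =
      (wronskian (v 2) (X * v 1)).eval z + l * (v 2).eval z ^ 2 := by
  simp only [wronskian_X_mul_right, eval_add, eval_mul, eval_X, eval_wronskian,
    eval_Lmat_mulVec, eval_derivative_Lmat_mulVec, cons_val]
  ring

lemma eval_wronskian_Gmat_mulVec_one_zero :
    (wronskian ((Gmat m *ᵥ v) 1) ((Gmat m *ᵥ v) 0)).eval z =
      (wronskian (v 1) (v 0)).eval z := by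
  simp only [eval_wronskian, eval_Gmat_mulVec, eval_derivative_Gmat_mulVec, cons_val]

lemma eval_wronskian_Gmat_mulVec_two_zero :
    (wronskian ((Gmat m *ᵥ v) 2) ((Gmat m *ᵥ v) 0)).eval z =
      (wronskian (v 2) (v 0)).eval z + 2 * m * (v 0).eval z ^ 2 := by
  simp only [eval_wronskian, eval_Gmat_mulVec, eval_derivative_Gmat_mulVec, cons_val]
  ring

lemma eval_wronskian_Gmat_mulVec_two_one :
    (wronskian ((Gmat m *ᵥ v) 2) ((Gmat m *ᵥ v) 1)).eval z =
      (wronskian (v 2) (v 1)).eval z + 2 * m * (wronskian (v 1) (X * v 0)).eval z := by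
  simp only [wronskian_X_mul_right, eval_add, eval_mul, eval_X, eval_wronskian,
    eval_Gmat_mulVec, eval_derivative_Gmat_mulVec, cons_val]
  ring

lemma eval_wronskian_Gmat_mulVec_one_X_mul_zero :
    (wronskian ((Gmat m *ᵥ v) 1) (X * (Gmat m *ᵥ v) 0)).eval z =
      (wronskian (v 1) (X * v 0)).eval z := by
  simp only [wronskian_X_mul_right, eval_add, eval_mul, eval_X, eval_wronskian,
    eval_Gmat_mulVec, eval_derivative_Gmat_mulVec, cons_val]

lemma eval_wronskian_Gmat_mulVec_two_X_mul_zero :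
    (wronskian ((Gmat m *ᵥ v) 2) (X * (Gmat m *ᵥ v) 0)).eval z =
      (wronskian (v 2) (X * v 0)).eval z := by
  simp only [wronskian_X_mul_right, eval_add, eval_mul, eval_X, eval_wronskian,
    eval_Gmat_mulVec, eval_derivative_Gmat_mulVec, cons_val]
  ring

lemma eval_wronskian_Gmat_mulVec_two_X_mul_one :
    (wronskian ((Gmat m *ᵥ v) 2) (X * (Gmat m *ᵥ v) 1)).eval z =
      (wronskian (v 2) (X * v 1)).eval z +
        2 * m * z ^ 2 * (wronskian (v 1) (v 0)).eval z := by
  simp only [wronskian_X_mul_right, eval_add, eval_mul, eval_X, eval_wronskian,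
    eval_Gmat_mulVec, eval_derivative_Gmat_mulVec, cons_val]
  ring

end TransferMatrices

lemma transMat_add_two_mulVec (m l : ℕ → ℝ) (k : ℕ) (v : Fin 3 → ℝ[X]) :
    transMat m l (k + 2) *ᵥ v =
      Gmat (m (k + 2)) *ᵥ (Lmat (l (k + 1)) *ᵥ (transMat m l (k + 1) *ᵥ v)) := by
  simp only [transMat, mulVec_mulVec, Matrix.mul_assoc]

/-- The Wronskians `W(b, c)`, `W(a, c)`, `W(a, b)` and `W(b, Xc)`, `W(a, Xc)`, `W(a, Xb)` of the
state `v = (c, b, a)` are all nonnegative at `z`, where `W(p, q) = p q' - p' q`. This condition is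
preserved by the transfer matrices of a string with nonnegative masses and gaps. -/
structure WronskianNonneg (z : ℝ) (v : Fin 3 → ℝ[X]) : Prop where
  one_zero : 0 ≤ (wronskian (v 1) (v 0)).eval z
  two_zero : 0 ≤ (wronskian (v 2) (v 0)).eval z
  two_one : 0 ≤ (wronskian (v 2) (v 1)).eval z
  one_X_mul_zero : 0 ≤ (wronskian (v 1) (X * v 0)).eval z
  two_X_mul_zero : 0 ≤ (wronskian (v 2) (X * v 0)).eval z
  two_X_mul_one : 0 ≤ (wronskian (v 2) (X * v 1)).eval z

namespace WronskianNonneg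

variable {z l m : ℝ} {v : Fin 3 → ℝ[X]}

lemma initial (z : ℝ) : WronskianNonneg z ![1, 0, 0] := by
  constructor <;> simp [wronskian]

lemma Lmat_mulVec (hv : WronskianNonneg z v) (hl : 0 ≤ l) :
    WronskianNonneg z (Lmat l *ᵥ v) := by
  obtain ⟨h10, h20, h21, hX10, hX20, hX21⟩ := hv
  constructor
  · rw [eval_wronskian_Lmat_mulVec_one_zero]
    exact add_nonneg (add_nonneg h10 (mul_nonneg hl h20)) (mul_nonneg (by positivity) h21)
  · rw [eval_wronskian_Lmat_mulVec_two_zero]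
    exact add_nonneg h20 (mul_nonneg hl h21)
  · rwa [eval_wronskian_Lmat_mulVec_two_one]
  · rw [eval_wronskian_Lmat_mulVec_one_X_mul_zero]
    exact add_nonneg (add_nonneg (add_nonneg hX10 (mul_nonneg hl hX20))
      (mul_nonneg (by positivity) hX21)) (by positivity)
  · rw [eval_wronskian_Lmat_mulVec_two_X_mul_zero]
    exact add_nonneg (add_nonneg hX20 (mul_nonneg hl hX21)) (by positivity)
  · rw [eval_wronskian_Lmat_mulVec_two_X_mul_one]
    exact add_nonneg hX21 (by positivity)

lemma Gmat_mulVec (hv : WronskianNonneg z v) (hm : 0 ≤ m) :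
    WronskianNonneg z (Gmat m *ᵥ v) := by
  obtain ⟨h10, h20, h21, hX10, hX20, hX21⟩ := hv
  constructor
  · rwa [eval_wronskian_Gmat_mulVec_one_zero]
  · rw [eval_wronskian_Gmat_mulVec_two_zero]
    exact add_nonneg h20 (by positivity)
  · rw [eval_wronskian_Gmat_mulVec_two_one]
    exact add_nonneg h21 (mul_nonneg (by positivity) hX10)
  · rwa [eval_wronskian_Gmat_mulVec_one_X_mul_zero]
  · rwa [eval_wronskian_Gmat_mulVec_two_X_mul_zero]
  · rw [eval_wronskian_Gmat_mulVec_two_X_mul_one]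
    exact add_nonneg hX21 (mul_nonneg (by positivity) h10)

lemma two_one_pos_Gmat_mulVec_Lmat_mulVec (hv : WronskianNonneg z v) (hl : 0 < l) (hm : 0 < m)
    (h : (v 2).eval z ≠ 0 ∨ 0 < (wronskian (v 2) (v 1)).eval z) :
    0 < (wronskian ((Gmat m *ᵥ (Lmat l *ᵥ v)) 2) ((Gmat m *ᵥ (Lmat l *ᵥ v)) 1)).eval z := by
  rw [eval_wronskian_Gmat_mulVec_two_one, eval_wronskian_Lmat_mulVec_two_one]
  have hw_nonneg := (hv.Lmat_mulVec hl.le).one_X_mul_zero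
  obtain ⟨-, -, h21, hX10, hX20, hX21⟩ := hv
  rcases h with h2 | h21_pos
  · have hw_pos : 0 < (wronskian ((Lmat l *ᵥ v) 1) (X * (Lmat l *ᵥ v) 0)).eval z := by
      rw [eval_wronskian_Lmat_mulVec_one_X_mul_zero]
      exact add_pos_of_nonneg_of_pos (add_nonneg (add_nonneg hX10 (mul_nonneg hl.le hX20))
        (mul_nonneg (by positivity) hX21)) (by positivity)
    exact add_pos_of_nonneg_of_pos h21 (mul_pos (by positivity) hw_pos)
  · exact add_pos_of_pos_of_nonneg h21_pos (mul_nonneg (by positivity) hw_nonneg)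

lemma transMat_mulVec (m l : ℕ → ℝ) (z : ℝ) : ∀ n : ℕ,
    (∀ i, 1 ≤ i → i ≤ n → 0 ≤ m i) → (∀ i, 1 ≤ i → i < n → 0 ≤ l i) →
      WronskianNonneg z (transMat m l n *ᵥ ![1, 0, 0])
  | 0, _, _ => by simpa only [transMat, one_mulVec] using initial z
  | 1, hm, _ => (initial z).Gmat_mulVec (hm 1 le_rfl le_rfl)
  | k + 2, hm, hl => by
    have ih : WronskianNonneg z (transMat m l (k + 1) *ᵥ ![1, 0, 0]) :=
      transMat_mulVec m l z (k + 1) (fun i hi hik => hm i hi (by omega))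
        fun i hi hik => hl i hi (by omega)
    rw [transMat_add_two_mulVec]
    exact (ih.Lmat_mulVec (hl (k + 1) (by omega) (by omega))).Gmat_mulVec
      (hm (k + 2) (by omega) le_rfl)

end WronskianNonneg

lemma eval_transMat_mulVec_ne_zero_or_eval_wronskian_pos {m l : ℕ → ℝ} {z : ℝ}
    (hz : z ≠ 0) (k : ℕ) (hm : ∀ i, 1 ≤ i → i ≤ k + 1 → 0 < m i)
    (hl : ∀ i, 1 ≤ i → i < k + 1 → 0 < l i) :
    ((transMat m l (k + 1) *ᵥ ![1, 0, 0]) 2).eval z ≠ 0 ∨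
      0 < (wronskian ((transMat m l (k + 1) *ᵥ ![1, 0, 0]) 2)
        ((transMat m l (k + 1) *ᵥ ![1, 0, 0]) 1)).eval z := by
  induction k with
  | zero =>
    left
    have hm₁ : m 1 ≠ 0 := (hm 1 le_rfl le_rfl).ne'
    simp [transMat, eval_Gmat_mulVec, hm₁, hz]
  | succ k ih =>
    right
    have hm' : ∀ i, 1 ≤ i → i ≤ k + 1 → 0 < m i := fun i hi hik => hm i hi (by omega)
    have hl' : ∀ i, 1 ≤ i → i < k + 1 → 0 < l i := fun i hi hik => hl i hi (by omega)
    have hv : WronskianNonneg z (transMat m l (k + 1) *ᵥ ![1, 0, 0]) :=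
      .transMat_mulVec m l z (k + 1) (fun i hi hik => (hm' i hi hik).le)
        fun i hi hik => (hl' i hi hik).le
    rw [transMat_add_two_mulVec]
    exact hv.two_one_pos_Gmat_mulVec_Lmat_mulVec (hl (k + 1) (by omega) (by omega))
      (hm (k + 2) (by omega) le_rfl) (ih hm' hl')

/-- **Negativity of the residues of the Weyl function.**  For the discrete cubic
string with `x_1 < ⋯ < x_n` and all masses positive, every nonzero root `λ` of the
polynomial `A` satisfies `B(λ)·A'(λ) < 0`; equivalently the residue
`b = B(λ)/A'(λ)` of `W = B/A` at `λ` is negative. -/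
theorem stmt7 (n : ℕ) (hn : 2 ≤ n) (x m : ℕ → ℝ)
    (hx : ∀ i, 1 ≤ i → i < n → x i < x (i + 1))
    (hm : ∀ i, 1 ≤ i → i ≤ n → 0 < m i)
    (Bp Ap : Polynomial ℝ)
    (hB : Bp = (transMat m (fun k => x (k + 1) - x k) n).mulVec ![1, 0, 0] 1)
    (hA : Ap = (transMat m (fun k => x (k + 1) - x k) n).mulVec ![1, 0, 0] 2) :
    ∀ lam : ℝ, lam ≠ 0 → Ap.eval lam = 0 →
      Bp.eval lam * Ap.derivative.eval lam < 0 ∧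
      Bp.eval lam / Ap.derivative.eval lam < 0 := by
  intro lam hlam hroot
  obtain ⟨k, rfl⟩ : ∃ k, n = k + 1 := ⟨n - 1, by omega⟩
  have hW : 0 < (wronskian Ap Bp).eval lam := by
    have h := eval_transMat_mulVec_ne_zero_or_eval_wronskian_pos hlam k hm
      fun i hi hik => sub_pos.mpr (hx i hi hik)
    rw [← hA, ← hB] at h
    exact h.resolve_left (not_not.mpr hroot)
  rw [eval_wronskian_of_isRoot hroot, neg_pos] at hW
  exact ⟨hW, div_neg_iff.mpr (mul_neg_iff.mp hW)⟩
end

section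
/- Let n ≥ 2, let 0 < λ_1 < ⋯ < λ_{n−1}, b_1, …, b_{n−1} < 0 and M > 0 be given. Define c_k = −Σ_{j=1}^{n−1} b_j b_k/(λ_j + λ_k), and the rational functions W(z) = Σ_{k=1}^{n−1} b_k/(z − λ_k), Z(z) = −1/(2Mz) + Σ_{k=1}^{n−1} c_k/(z − λ_k), W*(z) = −W(−z), Z*(z) = Z(−z). Fix 1 ≤ k ≤ n−1. Then there exist unique polynomials Q, P, P̂ with deg Q ≤ k, deg P ≤ k−1, deg P̂ ≤ k−1 and Q(0) = 1 such that, as z → ∞: Q(z)Z(z) − P̂(z) = O(z^{−1}), Q(z)W(z) − P(z) = O(z^{−1}), and P̂(z) + P(z)W*(z) + Q(z)Z*(z) = O(z^{−(k+1)}). Moreover, writing Q(z) = 1 + Σ_{j=1}^{k} q_j z^j and setting I_{ij} = Σ_{a,b=1}^{n−1} b_a b_b λ_a^i λ_b^j/(λ_a + λ_b), the coefficients satisfy the k×k linear system Σ_{j=1}^{k} I_{i−1, j} q_j = −(I_{i−1, 0} + δ_{i1}/(2M)) for i = 1, …, k. -/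
open Polynomial Filter Asymptotics

/-!
The first two conditions say that `Phat` and `P` are the polynomial parts of `Q Z` and `Q W`, with
remainders that are again sums of simple fractions. Since `Z + Z* + W W* = 0`, substituting these
remainders turns `Phat + P W* + Q Z*` into a sum of simple fractions with poles at `0` and the
`-λ_i`, and such a sum is `O(z^{-(k+1)})` exactly when the first `k` moments of its residues vanish.
These `k` equations are the linear system for the coefficients of `Q`. Its matrix `(I_{i,j+1})` is a
bimoment matrix of two discrete positive measures for the kernel `1 / (x + y)`; expanding its
determinant by the Cauchy–Binet formula and evaluating the Cauchy determinants that occur gives a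
sum of nonnegative terms, some of them positive.
-/

section Determinants

open Matrix Finset
open scoped Nat

variable {R m ι κ : Type*} [CommRing R] [Fintype m] [DecidableEq m] [Fintype ι] [Fintype κ]

lemma det_mul_eq_sum_prod_mul_det_submatrix (A : Matrix m ι R) (B : Matrix ι m R) :
    (A * B).det = ∑ f : m → ι, (∏ i, A i (f i)) * (B.submatrix f id).det := by
  classical
  have hrows : A * B = fun i => ∑ a, A i a • B a := by
    ext i j
    simp [mul_apply, Finset.sum_apply]
  calc (A * B).det = detRowAlternating.toMultilinearMap fun i => ∑ a, A i a • B a :=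
        congrArg det hrows
    _ = ∑ f : m → ι, detRowAlternating.toMultilinearMap fun i => A i (f i) • B (f i) :=
        MultilinearMap.map_sum _ _
    _ = ∑ f : m → ι, (∏ i, A i (f i)) * (B.submatrix f id).det :=
        sum_congr rfl fun f _ => MultilinearMap.map_smul_univ _ _ _

-- Cauchy–Binet, summed over all maps `m → ι` rather than over subsets of `ι`: every subset is then
-- counted once for each ordering, whence the factorial.
theorem factorial_card_mul_det_mul (A : Matrix m ι R) (B : Matrix ι m R) :
    ((Fintype.card m)! : R) * (A * B).det =
      ∑ f : m → ι, (A.submatrix id f).det * (B.submatrix f id).det := by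
  have hperm (σ : Equiv.Perm m) :
      ∑ f : m → ι, Equiv.Perm.sign σ * (∏ i, A (σ i) (f i)) * (B.submatrix f id).det =
        (A * B).det := by
    rw [det_mul_eq_sum_prod_mul_det_submatrix, ← (σ.symm.arrowCongr (Equiv.refl ι)).sum_comp]
    refine sum_congr rfl fun f _ => ?_
    have hB : (B.submatrix (f ∘ σ) id).det = Equiv.Perm.sign σ * (B.submatrix f id).det :=
      det_permute σ (B.submatrix f id)
    have hA : ∏ i, A (σ i) (f (σ i)) = ∏ i, A i (f i) := Equiv.prod_comp σ fun i => A i (f i)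
    have hsign : ((Equiv.Perm.sign σ : ℤ) : R) * (Equiv.Perm.sign σ : ℤ) = 1 := by
      exact_mod_cast congrArg (Int.cast : ℤ → R) (Int.units_coe_mul_self (Equiv.Perm.sign σ))
    change _ * (∏ i, A (σ i) (f (σ i))) * (B.submatrix (f ∘ σ) id).det = _
    rw [hA, hB]
    linear_combination (∏ i, A i (f i)) * (B.submatrix f id).det * hsign
  simp only [det_apply' (A.submatrix id _), sum_mul]
  rw [sum_comm]
  simp [hperm, Fintype.card_perm]

variable {K : Type*} [Field K] {k : ℕ}

lemma det_eval_eq_det_vandermonde_mul_det_coeff (x : Fin k → R) (p : Fin k → R[X])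
    (hp : ∀ j, (p j).natDegree < k) :
    (of fun i j => (p j).eval (x i)).det =
      (vandermonde x).det * (of fun i j : Fin k => (p j).coeff i).det := by
  rw [← det_mul]
  congr 1
  ext i j
  simp only [of_apply, mul_apply, vandermonde_apply, eval_eq_sum_range' (hp j), sum_range,
    mul_comm]

lemma det_vandermonde_neg_mul_det_vandermonde (y : Fin k → R) :
    (vandermonde (-y)).det * (vandermonde y).det = ∏ j, ∏ l ∈ {j}ᶜ, (y l - y j) := by
  rw [← prod_prod_Ioi_mul_eq_prod_prod_off_diag fun l j => y l - y j]
  simp only [det_vandermonde, Pi.neg_apply, neg_sub_neg, prod_mul_distrib]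
  rw [mul_comm]

lemma det_prod_compl_add {y : Fin k → K} (hy : Function.Injective y) (x : Fin k → K) :
    (of fun i j => ∏ l ∈ {j}ᶜ, (x i + y l)).det =
      (vandermonde x).det * (vandermonde y).det := by
  set p : Fin k → K[X] := fun j => ∏ l ∈ {j}ᶜ, (X + C (y l)) with hp
  have hdeg (j : Fin k) : (p j).natDegree < k := by
    refine (natDegree_prod_le _ _).trans_lt ?_
    simp [card_compl, j.pos]
  have heval (x : Fin k → K) : (of fun i j => ∏ l ∈ {j}ᶜ, (x i + y l)) =
      of fun i j => (p j).eval (x i) := by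
    ext i j
    simp [hp, eval_prod]
  have hdiag : (of fun i j => ∏ l ∈ {j}ᶜ, ((-y) i + y l)) =
      diagonal fun j => ∏ l ∈ {j}ᶜ, (y l - y j) := by
    ext i j
    rcases eq_or_ne i j with rfl | hij
    · simp [neg_add_eq_sub]
    · rw [diagonal_apply_ne _ hij]
      exact prod_eq_zero (mem_compl.2 (notMem_singleton.2 hij)) (neg_add_cancel _)
  -- The coefficient determinant does not depend on `x`, so it may be computed at `x = -y`, where
  -- the matrix is diagonal.
  have hcoeff : (of fun i j : Fin k => (p j).coeff i).det = (vandermonde y).det := by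
    refine mul_left_cancel₀ (det_vandermonde_ne_zero_iff.2 (neg_injective.comp hy)) ?_
    change (vandermonde (-y)).det * _ = (vandermonde (-y)).det * _
    rw [← det_eval_eq_det_vandermonde_mul_det_coeff _ _ hdeg, ← heval, hdiag, det_diagonal,
      det_vandermonde_neg_mul_det_vandermonde]
  rw [heval, det_eval_eq_det_vandermonde_mul_det_coeff _ _ hdeg, hcoeff]

theorem det_inv_add {x y : Fin k → K} (h : ∀ i j, x i + y j ≠ 0) :
    (of fun i j => (x i + y j)⁻¹).det =
      (vandermonde x).det * (vandermonde y).det / ∏ i, ∏ j, (x i + y j) := by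
  by_cases hy : Function.Injective y
  · rw [eq_div_iff (prod_ne_zero_iff.2 fun i _ => prod_ne_zero_iff.2 fun j _ => h i j), mul_comm,
      ← det_mul_column, ← det_prod_compl_add hy]
    congr 1
    ext i j
    simp only [of_apply]
    rw [Fintype.prod_eq_mul_prod_compl j, mul_comm, inv_mul_cancel_left₀ (h i j)]
  · obtain ⟨i, j, hij, hne⟩ := Function.not_injective_iff.1 hy
    rw [det_vandermonde_eq_zero_iff.2 ⟨i, j, hij, hne⟩, mul_zero, zero_div]
    exact det_zero_of_column_eq hne fun l => by simp [hij]

/-- The Cauchy bimoment `∫∫ sⁱ tʲ / (s + t)` of the discrete measures with weights `α`, `β` at the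
points `x`, `y`; for `α = β = b` and `x = y = λ` these are the `I_{ij}` of the cubic string. -/
noncomputable def cauchyBimoment (α x : ι → K) (β y : κ → K) (i j : ℕ) : K :=
  ∑ a, ∑ d, α a * β d * x a ^ i * y d ^ j / (x a + y d)

/-- The `k × k` matrix of Cauchy bimoments of order less than `k`, whose positivity makes the
approximation problem uniquely solvable. -/
noncomputable def cauchyBimomentMatrix (α x : ι → K) (β y : κ → K) (k : ℕ) :
    Matrix (Fin k) (Fin k) K :=
  of fun i j => cauchyBimoment α x β y i j

lemma cauchyBimomentMatrix_eq_mul (α x : ι → K) (β y : κ → K) (k : ℕ) :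
    cauchyBimomentMatrix α x β y k =
      (of fun (i : Fin k) a => α a * x a ^ (i : ℕ)) *
        ((of fun a d => (x a + y d)⁻¹) * of fun d (j : Fin k) => β d * y d ^ (j : ℕ)) := by
  ext i j
  simp only [cauchyBimomentMatrix, cauchyBimoment, of_apply, mul_apply, mul_sum]
  exact sum_congr rfl fun a _ => sum_congr rfl fun d _ => by ring

lemma factorial_sq_mul_det_cauchyBimomentMatrix {x : ι → K} {y : κ → K}
    (h : ∀ a d, x a + y d ≠ 0) (α : ι → K) (β : κ → K) (k : ℕ) :
    (k ! : K) ^ 2 * (cauchyBimomentMatrix α x β y k).det =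
      ∑ f : Fin k → ι, ∑ g : Fin k → κ,
        (∏ i, α (f i)) * (∏ j, β (g j)) / (∏ i, ∏ j, (x (f i) + y (g j))) *
          (vandermonde (x ∘ f)).det ^ 2 * (vandermonde (y ∘ g)).det ^ 2 := by
  set A : Matrix (Fin k) ι K := of fun i a => α a * x a ^ (i : ℕ)
  set C : Matrix ι κ K := of fun a d => (x a + y d)⁻¹
  set B : Matrix κ (Fin k) K := of fun d j => β d * y d ^ (j : ℕ)
  have hA (f : Fin k → ι) :
      (A.submatrix id f).det = (∏ i, α (f i)) * (vandermonde (x ∘ f)).det := by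
    rw [← det_transpose, ← det_mul_column]
    rfl
  have hB (g : Fin k → κ) :
      (B.submatrix g id).det = (∏ j, β (g j)) * (vandermonde (y ∘ g)).det :=
    det_mul_column (β ∘ g) (vandermonde (y ∘ g))
  have hC (f : Fin k → ι) (g : Fin k → κ) : (C.submatrix f g).det =
      (vandermonde (x ∘ f)).det * (vandermonde (y ∘ g)).det /
        ∏ i, ∏ j, (x (f i) + y (g j)) :=
    det_inv_add fun i j => h (f i) (g j)
  have hCB (f : Fin k → ι) : (k ! : K) * ((C * B).submatrix f id).det =
      ∑ g : Fin k → κ, (C.submatrix f g).det * (B.submatrix g id).det := by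
    simpa [submatrix_mul C B f id id Function.bijective_id] using
      factorial_card_mul_det_mul (C.submatrix f id) B
  have hACB : (k ! : K) * (A * (C * B)).det =
      ∑ f : Fin k → ι, (A.submatrix id f).det * ((C * B).submatrix f id).det := by
    simpa using factorial_card_mul_det_mul A (C * B)
  rw [cauchyBimomentMatrix_eq_mul, sq, mul_assoc, hACB, mul_sum]
  refine sum_congr rfl fun f _ => ?_
  rw [mul_left_comm, hCB, mul_sum]
  refine sum_congr rfl fun g _ => ?_
  rw [hA, hB, hC]
  ring

theorem det_cauchyBimomentMatrix_pos [LinearOrder K] [IsStrictOrderedRing K]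
    {α x : ι → K} {β y : κ → K} (hα : ∀ a, 0 < α a) (hβ : ∀ d, 0 < β d)
    (hx : Function.Injective x) (hy : Function.Injective y) (hxy : ∀ a d, 0 < x a + y d)
    (hι : k ≤ Fintype.card ι) (hκ : k ≤ Fintype.card κ) :
    0 < (cauchyBimomentMatrix α x β y k).det := by
  have hprod (f : Fin k → ι) (g : Fin k → κ) : 0 < (∏ i, α (f i)) * (∏ j, β (g j)) /
      ∏ i, ∏ j, (x (f i) + y (g j)) :=
    div_pos (mul_pos (prod_pos fun i _ => hα _) (prod_pos fun j _ => hβ _))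
      (prod_pos fun i _ => prod_pos fun j _ => hxy _ _)
  obtain ⟨f₀⟩ : Nonempty (Fin k ↪ ι) := Function.Embedding.nonempty_of_card_le (by simpa)
  obtain ⟨g₀⟩ : Nonempty (Fin k ↪ κ) := Function.Embedding.nonempty_of_card_le (by simpa)
  have hx₀ : (vandermonde (x ∘ f₀)).det ≠ 0 :=
    det_vandermonde_ne_zero_iff.2 (hx.comp f₀.injective)
  have hy₀ : (vandermonde (y ∘ g₀)).det ≠ 0 :=
    det_vandermonde_ne_zero_iff.2 (hy.comp g₀.injective)
  refine pos_of_mul_pos_right ?_ (sq_nonneg (k ! : K))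
  rw [factorial_sq_mul_det_cauchyBimomentMatrix fun a d => (hxy a d).ne']
  have hnn (f : Fin k → ι) (g : Fin k → κ) : 0 ≤ (∏ i, α (f i)) * (∏ j, β (g j)) /
      (∏ i, ∏ j, (x (f i) + y (g j))) *
        (vandermonde (x ∘ f)).det ^ 2 * (vandermonde (y ∘ g)).det ^ 2 :=
    mul_nonneg (mul_nonneg (hprod f g).le (sq_nonneg _)) (sq_nonneg _)
  refine sum_pos' (fun f _ => sum_nonneg fun g _ => hnn f g) ⟨f₀, mem_univ _, ?_⟩
  refine sum_pos' (fun g _ => hnn _ g) ⟨g₀, mem_univ _, ?_⟩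
  exact mul_pos (mul_pos (hprod _ _) (sq_pos_of_ne_zero hx₀)) (sq_pos_of_ne_zero hy₀)

lemma det_cauchyBimoment_succ_pos [LinearOrder K] [IsStrictOrderedRing K] {lam b : ι → K}
    (hlam : Function.Injective lam) (hpos : ∀ i, 0 < lam i) (hb : ∀ i, b i < 0)
    (hk : k ≤ Fintype.card ι) :
    0 < (of fun i j : Fin k => cauchyBimoment b lam b lam i (j + 1)).det := by
  have hshift : (of fun i j : Fin k => cauchyBimoment b lam b lam i (j + 1)) =
      cauchyBimomentMatrix (-b) lam (-b * lam) lam k := by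
    ext i j
    refine sum_congr rfl fun a _ => sum_congr rfl fun d _ => ?_
    simp only [Pi.mul_apply, Pi.neg_apply]
    ring
  have hb' (i : ι) : 0 < (-b) i := neg_pos.2 (hb i)
  rw [hshift]
  exact det_cauchyBimomentMatrix_pos hb' (fun i => mul_pos (hb' i) (hpos i)) hlam hlam
    (fun a d => add_pos (hpos a) (hpos d)) hk hk

end Determinants

section LinearSystem

open Matrix

lemma ext_of_natDegree_le_of_coeff_succ {R : Type*} [Semiring R] {p q : R[X]} {k : ℕ}
    (hp : p.natDegree ≤ k) (hq : q.natDegree ≤ k) (h₀ : p.eval 0 = q.eval 0)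
    (h : ∀ j : Fin k, p.coeff (j + 1) = q.coeff (j + 1)) : p = q := by
  refine (ext_iff_natDegree_le hp hq).2 fun n hn => ?_
  rcases n with _ | n
  · simpa only [coeff_zero_eq_eval_zero] using h₀
  · exact h ⟨n, hn⟩

theorem existsUnique_natDegree_le_sum_mul_coeff_succ_eq {R : Type*} [CommRing R] {k : ℕ}
    {A : Matrix (Fin k) (Fin k) R} (hA : IsUnit A.det) (r : Fin k → R) :
    ∃! Q : R[X], Q.natDegree ≤ k ∧ Q.eval 0 = 1 ∧ ∀ i, ∑ j, A i j * Q.coeff (j + 1) = r i := by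
  have hsolve (v : Fin k → R) : (∀ i, ∑ j, A i j * v j = r i) ↔ v = A⁻¹.mulVec r := by
    refine funext_iff.symm.trans ⟨?_, ?_⟩
    · rintro (rfl : A.mulVec v = r)
      rw [mulVec_mulVec, nonsing_inv_mul A hA, one_mulVec]
    · rintro rfl
      change A.mulVec _ = r
      rw [mulVec_mulVec, mul_nonsing_inv A hA, one_mulVec]
  set Q : R[X] := 1 + ∑ j : Fin k, C (A⁻¹.mulVec r j) * X ^ ((j : ℕ) + 1)
  have hcoeff (j : Fin k) : Q.coeff (j + 1) = A⁻¹.mulVec r j := by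
    simp [Q, coeff_one, coeff_X_pow, Fin.val_inj]
  have hdeg : Q.natDegree ≤ k := by
    refine natDegree_add_le_of_degree_le (by simp) (natDegree_sum_le_of_forall_le _ _ fun j _ => ?_)
    exact (natDegree_C_mul_X_pow_le _ _).trans j.isLt
  have heval : Q.eval 0 = 1 := by simp [Q, eval_finsetSum]
  refine ⟨Q, ⟨hdeg, heval, (hsolve _).2 (funext hcoeff)⟩, ?_⟩
  rintro Q' ⟨hdeg', hQ', hsys⟩
  exact ext_of_natDegree_le_of_coeff_succ hdeg' hdeg (hQ'.trans heval.symm)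
    fun j => (congrFun ((hsolve _).1 hsys) j).trans (hcoeff j).symm

end LinearSystem

section CauchyTransform

variable {K ι κ : Type*} [Field K] [Fintype ι] [Fintype κ]

/-- The Cauchy transform of the discrete measure with weights `w` at the points `μ`: the form of
all Weyl functions and remainders here. Division by zero gives the terms with `z = μ i` the
value `0`. -/
noncomputable def cauchyTransform (w μ : ι → K) (z : K) : K :=
  ∑ i, w i / (z - μ i)

lemma cauchyTransform_neg_right (w μ : ι → K) (z : K) :
    cauchyTransform w μ (-z) = -cauchyTransform w (-μ) z := by
  rw [cauchyTransform, cauchyTransform, ← Finset.sum_neg_distrib]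
  refine Finset.sum_congr rfl fun i _ => ?_
  rw [← div_neg, Pi.neg_apply]
  ring

lemma cauchyTransform_neg_left (w μ : ι → K) (z : K) :
    cauchyTransform (-w) μ z = -cauchyTransform w μ z := by
  simp only [cauchyTransform, Pi.neg_apply, neg_div, Finset.sum_neg_distrib]

lemma cauchyTransform_elim' (w₀ μ₀ : K) (w μ : ι → K) (z : K) :
    cauchyTransform (Option.elim' w₀ w) (Option.elim' μ₀ μ) z =
      w₀ / (z - μ₀) + cauchyTransform w μ z :=
  Fintype.sum_option _

/-- The residue at `ν i` of the product of the Cauchy transforms with weights `v` at `-μ` and `w`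
at `ν`. It serves to decompose such products into partial fractions. -/
noncomputable def crossWeight (v μ : κ → K) (w ν : ι → K) (i : ι) : K :=
  ∑ j, v j * w i / (μ j + ν i)

omit [Fintype ι] in
lemma crossWeight_mul_right (v μ : κ → K) (w ν u : ι → K) :
    crossWeight v μ (w * u) ν = crossWeight v μ w ν * u := by
  ext i
  simp only [crossWeight, Pi.mul_apply, Finset.sum_mul]
  exact Finset.sum_congr rfl fun j _ => by ring

lemma cauchyTransform_mul_cauchyTransform_neg {w ν : ι → K} {v μ : κ → K}
    (h : ∀ j i, μ j + ν i ≠ 0) {z : K} (hν : ∀ i, z ≠ ν i) (hμ : ∀ j, z ≠ -μ j) :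
    cauchyTransform w ν z * cauchyTransform v (-μ) z =
      cauchyTransform (crossWeight v μ w ν) ν z -
        cauchyTransform (crossWeight w ν v μ) (-μ) z := by
  simp only [cauchyTransform, crossWeight, Finset.sum_mul_sum, Finset.sum_div]
  rw [Finset.sum_comm (f := fun j i => _ / (_ - (-μ) j)), ← Finset.sum_sub_distrib]
  refine Finset.sum_congr rfl fun i _ => ?_
  rw [← Finset.sum_sub_distrib]
  refine Finset.sum_congr rfl fun j _ => ?_
  have hzν : z - ν i ≠ 0 := sub_ne_zero.2 (hν i)
  have hzμ : z - -μ j ≠ 0 := sub_ne_zero.2 (hμ j)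
  have hνμ : ν i + μ j ≠ 0 := add_comm (μ j) (ν i) ▸ h j i
  rw [Pi.neg_apply, add_comm (μ j)]
  field_simp
  ring

/-- The polynomial part of `Q` times the Cauchy transform with weights `w` at the points `μ`. It is
the only polynomial approximating this product up to `O(z⁻¹)`. -/
noncomputable def polyPart (w μ : ι → K) (Q : K[X]) : K[X] :=
  ∑ i, C (w i) * (Q /ₘ (X - C (μ i)))

lemma natDegree_polyPart_le (w μ : ι → K) (Q : K[X]) :
    (polyPart w μ Q).natDegree ≤ Q.natDegree - 1 := by
  refine natDegree_sum_le_of_forall_le _ _ fun i _ => (natDegree_C_mul_le _ _).trans ?_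
  rw [natDegree_divByMonic _ (monic_X_sub_C _), natDegree_X_sub_C]

lemma eval_mul_cauchyTransform (w : ι → K) {μ : ι → K} (Q : K[X]) {z : K} (hz : ∀ i, z ≠ μ i) :
    Q.eval z * cauchyTransform w μ z =
      (polyPart w μ Q).eval z + cauchyTransform (w * fun i => Q.eval (μ i)) μ z := by
  simp only [polyPart, Pi.mul_apply, cauchyTransform, eval_finsetSum, Finset.mul_sum,
    ← Finset.sum_add_distrib]
  refine Finset.sum_congr rfl fun i _ => ?_
  have hdiv := congrArg (eval z) (modByMonic_add_div Q (X - C (μ i)))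
  simp only [modByMonic_X_sub_C_eq_C_eval, eval_add, eval_C, eval_mul, eval_sub, eval_X] at hdiv
  have hzi : z - μ i ≠ 0 := sub_ne_zero.2 (hz i)
  rw [← hdiv, eval_C_mul]
  field_simp
  ring

lemma coeff_polyPart_X_pow (w μ : ι → K) (k n : ℕ) :
    (polyPart w μ (X ^ k)).coeff n = if n < k then ∑ i, w i * μ i ^ (k - (n + 1)) else 0 := by
  simp only [polyPart, finsetSum_coeff, coeff_C_mul, coeff_divByMonic_X_sub_C, natDegree_X_pow,
    coeff_X_pow, mul_ite, mul_one, mul_zero, Finset.sum_ite_eq', Finset.mem_Icc, Nat.succ_le_iff,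
    le_refl, and_true]
  split_ifs <;> simp

lemma polyPart_X_pow_eq_zero_iff (w μ : ι → K) (k : ℕ) :
    polyPart w μ (X ^ k) = 0 ↔ ∀ l < k, ∑ i, w i * μ i ^ l = 0 := by
  simp only [Polynomial.ext_iff, coeff_polyPart_X_pow, coeff_zero, ite_eq_right_iff]
  refine ⟨fun h l hl => ?_, fun h n hn => h _ (by omega)⟩
  simpa [show k - (k - 1 - l + 1) = l by omega] using h (k - 1 - l) (by omega)

lemma sum_crossWeight_mul_pow (v μ : κ → K) (w ν : ι → K) {Q : K[X]} {k : ℕ}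
    (hQ : Q.natDegree < k) (l : ℕ) :
    ∑ i, crossWeight (v * fun j => Q.eval (μ j)) μ w ν i * ν i ^ l =
      ∑ n ∈ Finset.range k, Q.coeff n * cauchyBimoment w ν v μ l n := by
  simp only [crossWeight, cauchyBimoment, Pi.mul_apply, eval_eq_sum_range' hQ, Finset.mul_sum,
    Finset.sum_mul, Finset.sum_div]
  rw [Finset.sum_comm (s := Finset.range k)]
  refine Finset.sum_congr rfl fun i _ => ?_
  rw [Finset.sum_comm (s := Finset.range k)]
  refine Finset.sum_congr rfl fun j _ => Finset.sum_congr rfl fun n _ => ?_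
  ring

end CauchyTransform

section Asymptotics

lemma eventually_forall_ne_atTop {α ι : Type*} [Finite ι] [Preorder α] [NoTopOrder α]
    (μ : ι → α) : ∀ᶠ z in atTop, ∀ i, z ≠ μ i :=
  eventually_all.2 fun i => eventually_ne_atTop (μ i)

variable {ι : Type*} [Fintype ι]

lemma isBigO_cauchyTransform_inv (w μ : ι → ℝ) :
    cauchyTransform w μ =O[atTop] fun z : ℝ => z⁻¹ := by
  refine IsBigO.fun_sum fun i _ => ?_
  have hequiv : (fun z : ℝ => z - μ i) ~[atTop] id :=
    IsEquivalent.refl.sub_isLittleO (isLittleO_const_id_atTop (μ i))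
  simpa only [div_eq_mul_inv] using! hequiv.inv.isBigO.const_mul_left (w i)

lemma eq_zero_of_eval_isBigO_inv {p : ℝ[X]}
    (h : (fun z => p.eval z) =O[atTop] fun z : ℝ => z⁻¹) : p = 0 := by
  have hlim : Tendsto (fun z => p.eval z) atTop (nhds 0) := h.trans_tendsto tendsto_inv_atTop_zero
  exact leadingCoeff_eq_zero.1 (p.tendsto_nhds_iff.1 hlim).1

lemma isBigO_eval_mul_cauchyTransform_sub_eval_iff (w μ : ι → ℝ) (Q P : ℝ[X]) :
    (fun z => Q.eval z * cauchyTransform w μ z - P.eval z) =O[atTop] (fun z : ℝ => z⁻¹) ↔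
      P = polyPart w μ Q := by
  have hsplit : (fun z => Q.eval z * cauchyTransform w μ z - P.eval z) =ᶠ[atTop]
      fun z => (polyPart w μ Q - P).eval z + cauchyTransform (w * fun i => Q.eval (μ i)) μ z := by
    filter_upwards [eventually_forall_ne_atTop μ] with z hz
    rw [eval_mul_cauchyTransform w Q hz, eval_sub]
    ring
  have hrem := isBigO_cauchyTransform_inv (w * fun i => Q.eval (μ i)) μ
  rw [isBigO_congr hsplit .rfl]
  constructor
  · intro h
    refine (sub_eq_zero.1 (eq_zero_of_eval_isBigO_inv ?_)).symm
    simpa only [add_sub_cancel_right] using h.sub hrem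
  · rintro rfl
    simpa only [sub_self, eval_zero, zero_add] using hrem

lemma isBigO_inv_pow_succ_iff (f : ℝ → ℝ) (k : ℕ) :
    f =O[atTop] (fun z : ℝ => (z ^ (k + 1))⁻¹) ↔
      (fun z => z ^ k * f z) =O[atTop] (fun z : ℝ => z⁻¹) := by
  rw [isBigO_mul_iff_isBigO_div ((eventually_ne_atTop 0).mono fun z hz => pow_ne_zero k hz)]
  simp only [pow_succ', mul_inv, div_eq_mul_inv]

theorem isBigO_cauchyTransform_inv_pow_succ_iff (w μ : ι → ℝ) (k : ℕ) :
    cauchyTransform w μ =O[atTop] (fun z : ℝ => (z ^ (k + 1))⁻¹) ↔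
      ∀ l < k, ∑ i, w i * μ i ^ l = 0 := by
  rw [isBigO_inv_pow_succ_iff, ← polyPart_X_pow_eq_zero_iff, eq_comm,
    ← isBigO_eval_mul_cauchyTransform_sub_eval_iff]
  simp only [eval_pow, eval_X, eval_zero, sub_zero]

end Asymptotics

section Weyl

section Field

variable {K ι : Type*} [Field K] [Fintype ι]

/-- The residues of the second Weyl function `Z` of the cubic string, with `m = 1 / (2M)`; the index
`none` stands for its pole at `0` and `some i` for the pole at `lam i`. -/
noncomputable def weylZWeights (m : K) (lam b : ι → K) : Option ι → K :=
  Option.elim' (-m) (-crossWeight b lam b lam)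

/-- The second Weyl function `Z` of the cubic string, with `m = 1 / (2M)`. Encoding it as a Cauchy
transform over `Option ι` lets `Z` and `W` share the theory of `polyPart`. -/
noncomputable def weylZ (m : K) (lam b : ι → K) : K → K :=
  cauchyTransform (weylZWeights m lam b) (Option.elim' 0 lam)

lemma weylZ_apply (m : K) (lam b : ι → K) (z : K) :
    weylZ m lam b z = -(m / z) - cauchyTransform (crossWeight b lam b lam) lam z := by
  rw [weylZ, weylZWeights, cauchyTransform_elim', cauchyTransform_neg_left, sub_zero, neg_div,
    sub_eq_add_neg]

lemma weylZ_add_weylZ_neg (m : K) {lam : ι → K} (b : ι → K) (hlam : ∀ i j, lam i + lam j ≠ 0)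
    {z : K} (hz : ∀ i, z ≠ lam i) (hz' : ∀ i, z ≠ -lam i) :
    weylZ m lam b z + weylZ m lam b (-z) =
      cauchyTransform b lam z * cauchyTransform b lam (-z) := by
  simp only [weylZ_apply, cauchyTransform_neg_right, mul_neg, div_neg,
    cauchyTransform_mul_cauchyTransform_neg hlam hz hz']
  ring

lemma eval_polyPart_add_mul_add_mul (m : K) {lam : ι → K} (b : ι → K) (Q : K[X])
    (hlam : ∀ i j, lam i + lam j ≠ 0) {z : K} (hz₀ : z ≠ 0) (hz : ∀ i, z ≠ lam i)
    (hz' : ∀ i, z ≠ -lam i) :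
    (polyPart (weylZWeights m lam b) (Option.elim' 0 lam) Q).eval z +
        (polyPart b lam Q).eval z * -cauchyTransform b lam (-z) + Q.eval z * weylZ m lam b (-z) =
      cauchyTransform
        (Option.elim' (m * Q.eval 0) (crossWeight (b * fun i => Q.eval (lam i)) lam b lam))
        (Option.elim' 0 (-lam)) z := by
  set q : ι → K := fun i => Q.eval (lam i)
  have hWeyl := weylZ_add_weylZ_neg m b hlam hz hz'
  have hW := eval_mul_cauchyTransform b Q hz
  have hZ := eval_mul_cauchyTransform (weylZWeights m lam b) (μ := Option.elim' 0 lam) Q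
    (Option.forall.2 ⟨hz₀, hz⟩)
  have hweights : (weylZWeights m lam b * fun o => Q.eval (Option.elim' 0 lam o)) =
      Option.elim' (-(m * Q.eval 0)) (-crossWeight b lam (b * q) lam) := by
    rw [crossWeight_mul_right, ← neg_mul, ← neg_mul]
    ext (_ | i) <;> rfl
  have hprod := cauchyTransform_mul_cauchyTransform_neg (w := b * q) (v := b) hlam hz hz'
  rw [hweights, cauchyTransform_elim', cauchyTransform_neg_left] at hZ
  change Q.eval z * weylZ m lam b z = _ at hZ
  rw [cauchyTransform_neg_right] at hWeyl ⊢
  rw [cauchyTransform_elim']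
  linear_combination Q.eval z * hWeyl - hZ - cauchyTransform b (-lam) z * hW - hprod

end Field

/-- The triple `(Q, P, Phat)` solves the Type III simultaneous rational approximation problem of
order `k` for the functions `W`, `Z`, `W* = Ws` and `Z* = Zs`. -/
def IsTypeIIIApproximant (W Z Ws Zs : ℝ → ℝ) (k : ℕ) (Q P Phat : ℝ[X]) : Prop :=
  Q.natDegree ≤ k ∧ P.natDegree ≤ k - 1 ∧ Phat.natDegree ≤ k - 1 ∧ Q.eval 0 = 1 ∧
    (fun z => Q.eval z * Z z - Phat.eval z) =O[atTop] (fun z : ℝ => z⁻¹) ∧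
    (fun z => Q.eval z * W z - P.eval z) =O[atTop] (fun z : ℝ => z⁻¹) ∧
    (fun z => Phat.eval z + P.eval z * Ws z + Q.eval z * Zs z)
      =O[atTop] (fun z : ℝ => (z ^ (k + 1))⁻¹)

variable {ι : Type*} [Fintype ι]

lemma sum_elim'_mul_pow (m : ℝ) (lam b : ι → ℝ) {Q : ℝ[X]} {k : ℕ} (hQ : Q.natDegree ≤ k)
    (hQ₀ : Q.eval 0 = 1) (l : ℕ) :
    ∑ o, (Option.elim' (m * Q.eval 0) (crossWeight (b * fun i => Q.eval (lam i)) lam b lam) :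
        Option ι → ℝ) o * (Option.elim' 0 (-lam) : Option ι → ℝ) o ^ l =
      (-1) ^ l * (∑ j : Fin k, cauchyBimoment b lam b lam l (j + 1) * Q.coeff (j + 1) +
        (cauchyBimoment b lam b lam l 0 + if l = 0 then m else 0)) := by
  have hsum := sum_crossWeight_mul_pow b lam b lam (Nat.lt_succ_of_le hQ) l
  rw [Finset.sum_range_succ', Finset.sum_range, coeff_zero_eq_eval_zero, hQ₀, one_mul] at hsum
  simp only [Fintype.sum_option, Option.elim'_none, Option.elim'_some, Pi.neg_apply,
    neg_pow (lam _), mul_left_comm _ ((-1 : ℝ) ^ l), ← Finset.mul_sum, hsum, hQ₀, mul_one]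
  rcases eq_or_ne l 0 with rfl | hl
  · simp only [pow_zero, one_mul, if_true, mul_comm (Q.coeff _)]
    ring
  · simp [hl, mul_comm]

variable {lam : ι → ℝ}

lemma isBigO_polyPart_add_mul_add_mul_iff (m : ℝ) (b : ι → ℝ) (hpos : ∀ i, 0 < lam i)
    {Q : ℝ[X]} {k : ℕ} (hQ : Q.natDegree ≤ k) (hQ₀ : Q.eval 0 = 1) :
    (fun z => (polyPart (weylZWeights m lam b) (Option.elim' 0 lam) Q).eval z +
        (polyPart b lam Q).eval z * -cauchyTransform b lam (-z) + Q.eval z * weylZ m lam b (-z))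
      =O[atTop] (fun z : ℝ => (z ^ (k + 1))⁻¹) ↔
      ∀ i : Fin k, ∑ j : Fin k, cauchyBimoment b lam b lam i (j + 1) * Q.coeff (j + 1) =
        -(cauchyBimoment b lam b lam i 0 + if (i : ℕ) = 0 then m else 0) := by
  have hlam (i j : ι) : lam i + lam j ≠ 0 := (add_pos (hpos i) (hpos j)).ne'
  have hremainder := (eventually_ne_atTop (0 : ℝ)).and
    ((eventually_forall_ne_atTop lam).and (eventually_forall_ne_atTop (-lam))) |>.mono
    fun z ⟨hz₀, hz, hz'⟩ => eval_polyPart_add_mul_add_mul m b Q hlam hz₀ hz hz'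
  rw [isBigO_congr hremainder .rfl, isBigO_cauchyTransform_inv_pow_succ_iff]
  simp only [sum_elim'_mul_pow m lam b hQ hQ₀, mul_eq_zero, pow_eq_zero_iff', neg_eq_zero,
    one_ne_zero, false_and, false_or, ← eq_neg_iff_add_eq_zero, Fin.forall_iff]

theorem isTypeIIIApproximant_iff (m : ℝ) (b : ι → ℝ) (hpos : ∀ i, 0 < lam i) {k : ℕ}
    {Q P Phat : ℝ[X]} :
    IsTypeIIIApproximant (cauchyTransform b lam) (weylZ m lam b)
        (fun z => -cauchyTransform b lam (-z)) (fun z => weylZ m lam b (-z)) k Q P Phat ↔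
      P = polyPart b lam Q ∧ Phat = polyPart (weylZWeights m lam b) (Option.elim' 0 lam) Q ∧
        Q.natDegree ≤ k ∧ Q.eval 0 = 1 ∧
        ∀ i : Fin k, ∑ j : Fin k, cauchyBimoment b lam b lam i (j + 1) * Q.coeff (j + 1) =
          -(cauchyBimoment b lam b lam i 0 + if (i : ℕ) = 0 then m else 0) := by
  rw [IsTypeIIIApproximant, weylZ, isBigO_eval_mul_cauchyTransform_sub_eval_iff,
    isBigO_eval_mul_cauchyTransform_sub_eval_iff]
  constructor
  · rintro ⟨hQ, -, -, hQ₀, rfl, rfl, h⟩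
    exact ⟨rfl, rfl, hQ, hQ₀, (isBigO_polyPart_add_mul_add_mul_iff m b hpos hQ hQ₀).1 h⟩
  · rintro ⟨rfl, rfl, hQ, hQ₀, h⟩
    have hdeg : Q.natDegree - 1 ≤ k - 1 := Nat.sub_le_sub_right hQ 1
    exact ⟨hQ, (natDegree_polyPart_le _ _ _).trans hdeg, (natDegree_polyPart_le _ _ _).trans hdeg,
      hQ₀, rfl, rfl, (isBigO_polyPart_add_mul_add_mul_iff m b hpos hQ hQ₀).2 h⟩

theorem existsUnique_isTypeIIIApproximant {b : ι → ℝ} (hlam : Function.Injective lam)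
    (hpos : ∀ i, 0 < lam i) (hb : ∀ i, b i < 0) (m : ℝ) {k : ℕ} (hk : k ≤ Fintype.card ι) :
    ∃! QPP : ℝ[X] × ℝ[X] × ℝ[X], IsTypeIIIApproximant (cauchyTransform b lam) (weylZ m lam b)
      (fun z => -cauchyTransform b lam (-z)) (fun z => weylZ m lam b (-z)) k
      QPP.1 QPP.2.1 QPP.2.2 := by
  obtain ⟨Q, hQ, huniq⟩ := existsUnique_natDegree_le_sum_mul_coeff_succ_eq
    (det_cauchyBimoment_succ_pos hlam hpos hb hk).ne'.isUnit
    fun i => -(cauchyBimoment b lam b lam i 0 + if (i : ℕ) = 0 then m else 0)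
  simp only [isTypeIIIApproximant_iff m b hpos]
  refine ⟨(Q, polyPart b lam Q, polyPart (weylZWeights m lam b) (Option.elim' 0 lam) Q),
    ⟨rfl, rfl, hQ⟩, ?_⟩
  rintro ⟨Q', P, Phat⟩ ⟨hP, hPhat, hQ'⟩
  obtain rfl : Q' = Q := huniq Q' hQ'
  exact Prod.ext rfl (Prod.ext hP hPhat)

end Weyl

theorem stmt14_general {ι : Type*} [Fintype ι] (lam b : ι → ℝ) (hlam : Function.Injective lam)
    (hpos : ∀ i, 0 < lam i) (hb : ∀ i, b i < 0) (m : ℝ) (k : ℕ) (hk : k ≤ Fintype.card ι)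
    (c : ι → ℝ) (hc : ∀ i, c i = -∑ j, b j * b i / (lam j + lam i)) (W Z Ws Zs : ℝ → ℝ)
    (hW : ∀ z, W z = ∑ i, b i / (z - lam i))
    (hZ : ∀ z, Z z = -(m / z) + ∑ i, c i / (z - lam i))
    (hWs : ∀ z, Ws z = -W (-z)) (hZs : ∀ z, Zs z = Z (-z)) (I : ℕ → ℕ → ℝ)
    (hI : ∀ i j, I i j = ∑ a, ∑ d, b a * b d * lam a ^ i * lam d ^ j / (lam a + lam d)) :
    (∃! QPP : ℝ[X] × ℝ[X] × ℝ[X],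
      IsTypeIIIApproximant W Z Ws Zs k QPP.1 QPP.2.1 QPP.2.2) ∧
    ∀ Q P Phat : ℝ[X], IsTypeIIIApproximant W Z Ws Zs k Q P Phat →
      ∀ i : Fin k, ∑ j : Fin k, I i (j + 1) * Q.coeff (j + 1) =
        -(I i 0 + if (i : ℕ) = 0 then m else 0) := by
  obtain rfl : W = cauchyTransform b lam := funext hW
  obtain rfl : c = -crossWeight b lam b lam := funext hc
  obtain rfl : Z = weylZ m lam b := funext fun z => by
    rw [hZ, weylZ_apply, sub_eq_add_neg, ← cauchyTransform_neg_left]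
    rfl
  obtain rfl : Ws = fun z => -cauchyTransform b lam (-z) := funext hWs
  obtain rfl : Zs = fun z => weylZ m lam b (-z) := funext hZs
  obtain rfl : I = cauchyBimoment b lam b lam := funext₂ hI
  exact ⟨existsUnique_isTypeIIIApproximant hlam hpos hb m hk,
    fun Q P Phat h => ((isTypeIIIApproximant_iff m b hpos).1 h).2.2.2.2⟩

/-- **The Type III simultaneous rational approximation problem.**
Given spectral data `0 < λ_1 < ⋯ < λ_{n−1}`, `b_i < 0`, `M > 0`, set
`c_i = −Σ_j b_j b_i/(λ_j + λ_i)`, `W(z) = Σ b_i/(z − λ_i)`,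
`Z(z) = −1/(2Mz) + Σ c_i/(z − λ_i)`, `W*(z) = −W(−z)`, `Z*(z) = Z(−z)`.
For fixed `1 ≤ k ≤ n−1` there are unique polynomials `Q, P, P̂` of degrees
`≤ k, k−1, k−1` with `Q(0) = 1` such that `QZ − P̂ = O(z⁻¹)`, `QW − P = O(z⁻¹)`
and `P̂ + P W* + Q Z* = O(z^{−(k+1)})` as `z → ∞`; moreover the coefficients
`q_j = Q.coeff j` satisfy `Σ_{j=1}^k I_{i−1,j} q_j = −(I_{i−1,0} + δ_{i1}/(2M))`,
where `I_{ij} = Σ_{a,d} b_a b_d λ_a^i λ_d^j/(λ_a + λ_d)`. -/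
theorem stmt14 (n : ℕ) (hn : 2 ≤ n) (lam b : Fin (n - 1) → ℝ)
    (hmono : StrictMono lam) (hpos : ∀ i, 0 < lam i) (hb : ∀ i, b i < 0)
    (M : ℝ) (hM : 0 < M) (k : ℕ) (hk1 : 1 ≤ k) (hk2 : k ≤ n - 1)
    (c : Fin (n - 1) → ℝ)
    (hc : ∀ i, c i = -∑ j, b j * b i / (lam j + lam i))
    (W Z Ws Zs : ℝ → ℝ)
    (hW : ∀ z, W z = ∑ i, b i / (z - lam i))
    (hZ : ∀ z, Z z = -(1 / (2 * M * z)) + ∑ i, c i / (z - lam i))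
    (hWs : ∀ z, Ws z = -W (-z)) (hZs : ∀ z, Zs z = Z (-z))
    (I : ℕ → ℕ → ℝ)
    (hI : ∀ i j, I i j = ∑ a, ∑ d, b a * b d * lam a ^ i * lam d ^ j / (lam a + lam d)) :
    (∃! QPP : Polynomial ℝ × Polynomial ℝ × Polynomial ℝ,
      QPP.1.natDegree ≤ k ∧ QPP.2.1.natDegree ≤ k - 1 ∧ QPP.2.2.natDegree ≤ k - 1 ∧
      QPP.1.eval 0 = 1 ∧
      (fun z => QPP.1.eval z * Z z - QPP.2.2.eval z) =O[atTop] (fun z : ℝ => z⁻¹) ∧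
      (fun z => QPP.1.eval z * W z - QPP.2.1.eval z) =O[atTop] (fun z : ℝ => z⁻¹) ∧
      (fun z => QPP.2.2.eval z + QPP.2.1.eval z * Ws z + QPP.1.eval z * Zs z)
        =O[atTop] (fun z : ℝ => (z ^ (k + 1))⁻¹)) ∧
    (∀ Q P Phat : Polynomial ℝ,
      Q.natDegree ≤ k → P.natDegree ≤ k - 1 → Phat.natDegree ≤ k - 1 →
      Q.eval 0 = 1 →
      (fun z => Q.eval z * Z z - Phat.eval z) =O[atTop] (fun z : ℝ => z⁻¹) →
      (fun z => Q.eval z * W z - P.eval z) =O[atTop] (fun z : ℝ => z⁻¹) →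
      (fun z => Phat.eval z + P.eval z * Ws z + Q.eval z * Zs z)
        =O[atTop] (fun z : ℝ => (z ^ (k + 1))⁻¹) →
      ∀ i : Fin k, ∑ j : Fin k, I (i : ℕ) ((j : ℕ) + 1) * Q.coeff ((j : ℕ) + 1)
        = -(I (i : ℕ) 0 + if (i : ℕ) = 0 then 1 / (2 * M) else 0)) := by
  have h := stmt14_general lam b hmono.injective hpos hb (1 / (2 * M)) k (by simpa using hk2) c hc
    W Z Ws Zs hW (fun z => by rw [hZ, div_div]) hWs hZs I hI
  exact ⟨h.1, fun Q P Phat hQ hP hPhat hQ₀ hZO hWO hO =>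
    h.2 Q P Phat ⟨hQ, hP, hPhat, hQ₀, hZO, hWO, hO⟩⟩
end
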